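/- In dimension 15, every finite set S of points on the unit sphere of EuclideanSpace ℝ (Fin 15) (i.e., ‖x‖ = 1 for all x ∈ S) such that any two distinct points of S are at Euclidean distance at least 1 has cardinality at most 4866; that is, the kissing number in dimension 15 is at most 4866. -/

import Mathlib

/-!
The bound is the semidefinite programming bound of Bachoc and Vallentin for triples of points. For
unit vectors, and for their projections orthogonal to a further unit vector `z`, the kernels given
by the Gegenbauer polynomials of the inner products are positive semidefinite. A nonnegative
combination `T` of such kernels, summed over all triples of points of a kissing configuration, can
therefore be bounded from below by the square of a linear statistic of the pairs of points; if `T`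
is nonpositive on triples of distinct points and a companion polynomial in one variable controls
the pairs, completing the square bounds the number of points.

The dual solution below is given by integers. What remains are two polynomial inequalities for
cosines in `[-1, 1/2]`. They are verified by bisection: a polynomial is nonnegative on a box if its
Bernstein coefficients are. All coefficients of a polynomial are held in the digits of one natural
number, obtained by Kronecker substitution, and de Casteljau subdivision acts on all digits at once.
-/

section Programs

variable {R S : Type*} [Add R] [Mul R] [IntCast R] [Pow R ℕ] [Add S] [Mul S] [IntCast S] [Pow S ℕ]

/-- A map that preserves the operations from which polynomials with integer coefficients are built.
The polynomials below are programs over these operations, so that they run on real numbers, on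
integers and on syntactic expressions alike; this is the compatibility needed to move between
them. -/
structure IsPolyHom (φ : R → S) : Prop where
  map_add : ∀ x y, φ (x + y) = φ x + φ y
  map_mul : ∀ x y, φ (x * y) = φ x * φ y
  map_intCast : ∀ n : ℤ, φ n = n
  map_pow : ∀ x (n : ℕ), φ (x ^ n) = φ x ^ n

/-- The polynomial `k! · C_k^(a/2)` of Gegenbauer, homogenised so that `r` has twice the degree of
`x`; the zonal harmonics of `ℝᵐ` are the case `a = m - 2`. -/
def gegenbauer {R : Type*} [Add R] [Mul R] [IntCast R] (a : ℕ) (x r : R) : ℕ → R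
  | 0 => ((1 : ℤ) : R)
  | 1 => ((a : ℤ) : R) * x
  | k + 2 => ((2 * (k + 1) + a : ℤ) : R) * (x * gegenbauer a x r (k + 1)) +
      ((-((k + 1) * (k + a)) : ℤ) : R) * (r * gegenbauer a x r k)

theorem IsPolyHom.map_gegenbauer {φ : R → S} (hφ : IsPolyHom φ) (a : ℕ) (x r : R) (k : ℕ) :
    φ (gegenbauer a x r k) = gegenbauer a (φ x) (φ r) k := by
  induction k using Nat.twoStepInduction with
  | zero => simp only [gegenbauer, hφ.map_intCast]
  | one => simp only [gegenbauer, hφ.map_mul, hφ.map_intCast]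
  | more k ih₀ ih₁ => simp only [gegenbauer, hφ.map_add, hφ.map_mul, hφ.map_intCast, ih₀, ih₁]

end Programs

/-! ### Gegenbauer polynomials and zonal harmonics -/

section GegenbauerRing

variable {R : Type*} [CommRing R]

@[simp]
theorem gegenbauer_zero (a : ℕ) (x r : R) : gegenbauer a x r 0 = 1 := by
  simp only [gegenbauer, Int.cast_one]

@[simp]
theorem gegenbauer_one (a : ℕ) (x r : R) : gegenbauer a x r 1 = a * x := by
  simp only [gegenbauer, Int.cast_natCast]

theorem gegenbauer_add_two (a : ℕ) (x r : R) (k : ℕ) :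
    gegenbauer a x r (k + 2) = (2 * (k + 1) + a) * x * gegenbauer a x r (k + 1) -
      (k + 1) * (k + a) * r * gegenbauer a x r k := by
  rw [gegenbauer]
  push_cast
  ring

theorem isPolyHom_ringHom {S : Type*} [CommRing S] (φ : R →+* S) : IsPolyHom φ where
  map_add := map_add φ
  map_mul := map_mul φ
  map_intCast := map_intCast φ
  map_pow := map_pow φ

theorem gegenbauer_smul (a : ℕ) (c x r : R) (k : ℕ) :
    gegenbauer a (c * x) (c ^ 2 * r) k = c ^ k * gegenbauer a x r k := by
  induction k using Nat.twoStepInduction with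
  | zero => simp
  | one => simp; ring
  | more k ih₀ ih₁ => rw [gegenbauer_add_two, gegenbauer_add_two, ih₀, ih₁]; ring

/-- Modulo `r`, the homogenised Gegenbauer polynomial is a multiple of `xᵏ`; this is that
multiple. -/
def gegenbauerLeadingCoeff (a : ℕ) (k : ℕ) : ℕ := ∏ i ∈ Finset.range k, (2 * i + a)

theorem exists_gegenbauer_eq_add_mul (a : ℕ) (x r : R) (k : ℕ) :
    ∃ g, gegenbauer a x r k = gegenbauerLeadingCoeff a k * x ^ k + r * g := by
  induction k using Nat.twoStepInduction with
  | zero => exact ⟨0, by simp [gegenbauerLeadingCoeff]⟩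
  | one => exact ⟨0, by simp [gegenbauerLeadingCoeff]⟩
  | more k _ ih =>
    obtain ⟨g, hg⟩ := ih
    refine ⟨(2 * (k + 1) + a) * x * g - (k + 1) * (k + a) * gegenbauer a x r k, ?_⟩
    have leading : gegenbauerLeadingCoeff a (k + 2) =
        gegenbauerLeadingCoeff a (k + 1) * (2 * (k + 1) + a) := Finset.prod_range_succ _ _
    rw [gegenbauer_add_two, hg, leading]
    push_cast
    ring

theorem derivation_gegenbauer {A : Type*} [CommSemiring A] [Algebra A R] (D : Derivation A R R)
    {c x r : R} (hx : D x = c) (hr : D r = 2 * c * x) (a k : ℕ) :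
    D (gegenbauer a x r (k + 1)) = (k + 1) * (k + a) * c * gegenbauer a x r k := by
  have deriv_two : D 2 = 0 := by simpa using D.map_natCast 2
  induction k using Nat.twoStepInduction with
  | zero => simp [hx]
  | one =>
    simp only [gegenbauer_add_two, gegenbauer_zero, gegenbauer_one]
    simp [hx, hr, deriv_two]
    ring
  | more k ih₀ ih₁ =>
    rw [gegenbauer_add_two, map_sub]
    simp only [Derivation.leibniz, map_add, Derivation.map_natCast, Derivation.map_one_eq_zero,
      deriv_two, ih₀, ih₁, hx, hr, smul_eq_mul]
    rw [gegenbauer_add_two a x r k]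
    push_cast
    ring

end GegenbauerRing

section Fischer

open MvPolynomial

variable {σ : Type*} [Fintype σ]

/-- The Fischer inner product `p(∂) q (0)` on real polynomials: monomials are orthogonal, and the
square norm of `X^s` is `∏ sᵢ!`. -/
noncomputable def fischer :
    MvPolynomial σ ℝ →ₗ[ℝ] MvPolynomial σ ℝ →ₗ[ℝ] ℝ :=
  (basisMonomials σ ℝ).constr ℝ fun s => (∏ i, ((s i).factorial : ℝ)) • lcoeff ℝ s

/-- The linear form `⟨x, ·⟩`. -/
noncomputable def linearForm (x : σ → ℝ) : MvPolynomial σ ℝ := ∑ i, C (x i) * X i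

/-- The square of the Euclidean norm, as a polynomial. -/
noncomputable def normSqForm : MvPolynomial σ ℝ := ∑ i, X i ^ 2

/-- The derivative in the direction `x`. -/
noncomputable def directionalDeriv (x : σ → ℝ) :
    Derivation ℝ (MvPolynomial σ ℝ) (MvPolynomial σ ℝ) :=
  ∑ i, x i • pderiv i

/-- The Laplace operator. -/
noncomputable def laplacian : MvPolynomial σ ℝ →ₗ[ℝ] MvPolynomial σ ℝ :=
  ∑ i, (pderiv i).toLinearMap ∘ₗ (pderiv i).toLinearMap

theorem directionalDeriv_apply (x : σ → ℝ) (q : MvPolynomial σ ℝ) :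
    directionalDeriv x q = ∑ i, C (x i) * pderiv i q := by
  rw [directionalDeriv, ← Derivation.coeFnAddMonoidHom_apply, map_sum, Finset.sum_apply]
  simp only [Derivation.coeFnAddMonoidHom_apply, Derivation.smul_apply, smul_eq_C_mul]

theorem laplacian_apply (q : MvPolynomial σ ℝ) : laplacian q = ∑ i, pderiv i (pderiv i q) := by
  simp [laplacian]

theorem fischer_monomial (s : σ →₀ ℕ) (q : MvPolynomial σ ℝ) :
    fischer (monomial s 1) q = (∏ i, ((s i).factorial : ℝ)) * q.coeff s := by
  rw [← congrFun (coe_basisMonomials σ ℝ) s, fischer, Module.Basis.constr_basis]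
  rfl

theorem fischer_self_nonneg (p : MvPolynomial σ ℝ) : 0 ≤ fischer p p := by
  have expand : fischer p p = ∑ s ∈ p.support, (∏ i, ((s i).factorial : ℝ)) * p.coeff s ^ 2 := by
    conv_lhs => enter [1]; rw [p.as_sum]
    rw [map_sum, LinearMap.sum_apply]
    refine Finset.sum_congr rfl fun s _ => ?_
    rw [← mul_one (coeff s p), ← smul_eq_mul, ← smul_monomial, map_smul, LinearMap.smul_apply,
      fischer_monomial, smul_eq_mul, smul_eq_mul, mul_one]
    ring
  rw [expand]
  positivity

theorem prod_factorial_add_single (s : σ →₀ ℕ) (i : σ) :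
    ∏ j, (((s + Finsupp.single i 1 : σ →₀ ℕ) j).factorial : ℝ) =
      (s i + 1) * ∏ j, ((s j).factorial : ℝ) := by
  classical
  rw [← Finset.mul_prod_erase Finset.univ _ (Finset.mem_univ i),
    ← Finset.mul_prod_erase Finset.univ (fun j => ((s j).factorial : ℝ)) (Finset.mem_univ i),
    ← mul_assoc]
  congr 1
  · simp [Nat.factorial_succ]
  · refine Finset.prod_congr rfl fun j hj => ?_
    rw [Finsupp.add_apply, Finsupp.single_eq_of_ne (Finset.ne_of_mem_erase hj), add_zero]

theorem fischer_X_mul (i : σ) (p q : MvPolynomial σ ℝ) :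
    fischer (X i * p) q = fischer p (pderiv i q) := by
  suffices fischer ∘ₗ LinearMap.mulLeft ℝ (X i) =
      LinearMap.lcomp ℝ ℝ (pderiv i).toLinearMap ∘ₗ fischer from
    LinearMap.congr_fun₂ this p q
  refine (basisMonomials σ ℝ).ext fun s => LinearMap.ext fun q => ?_
  simp only [coe_basisMonomials, LinearMap.comp_apply, LinearMap.mulLeft_apply,
    LinearMap.lcomp_apply, Derivation.coeFn_coe]
  rw [X, monomial_mul, one_mul, add_comm _ s, fischer_monomial, prod_factorial_add_single,
    fischer_monomial, coeff_pderiv]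
  ring

theorem fischer_linearForm_mul (x : σ → ℝ) (p q : MvPolynomial σ ℝ) :
    fischer (linearForm x * p) q = fischer p (directionalDeriv x q) := by
  simp only [linearForm, directionalDeriv_apply, Finset.sum_mul, map_sum, LinearMap.sum_apply,
    ← smul_eq_C_mul, smul_mul_assoc, map_smul, LinearMap.smul_apply, fischer_X_mul]

theorem fischer_normSqForm_mul (p q : MvPolynomial σ ℝ) :
    fischer (normSqForm * p) q = fischer p (laplacian q) := by
  simp only [normSqForm, laplacian, Finset.sum_mul, map_sum, LinearMap.sum_apply, sq, mul_assoc,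
    fischer_X_mul, LinearMap.comp_apply, Derivation.coeFn_coe]

theorem isHomogeneous_linearForm (x : σ → ℝ) : (linearForm x).IsHomogeneous 1 :=
  IsHomogeneous.sum _ _ _ fun i _ => (isHomogeneous_C σ (x i)).mul (isHomogeneous_X ℝ i)

theorem isHomogeneous_normSqForm : (normSqForm : MvPolynomial σ ℝ).IsHomogeneous 2 :=
  IsHomogeneous.sum _ _ _ fun i _ => (isHomogeneous_X ℝ i).pow 2

theorem isHomogeneous_directionalDeriv (x : σ → ℝ) {k : ℕ} {q : MvPolynomial σ ℝ}
    (hq : q.IsHomogeneous (k + 1)) : (directionalDeriv x q).IsHomogeneous k := by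
  rw [directionalDeriv_apply]
  exact IsHomogeneous.sum _ _ _ fun i _ => by
    simpa using (isHomogeneous_C σ (x i)).mul (hq.pderiv (i := i))

theorem eval_directionalDeriv_self (x : σ → ℝ) {k : ℕ} {q : MvPolynomial σ ℝ}
    (hq : q.IsHomogeneous k) : eval x (directionalDeriv x q) = k * eval x q := by
  have euler := congrArg (eval x) hq.sum_X_mul_pderiv
  simpa [directionalDeriv_apply] using euler

theorem fischer_linearForm_pow (x : σ → ℝ) {k : ℕ} {q : MvPolynomial σ ℝ}
    (hq : q.IsHomogeneous k) : fischer (linearForm x ^ k) q = k.factorial * eval x q := by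
  induction k generalizing q with
  | zero =>
    obtain ⟨c, rfl⟩ : ∃ c, q = C c :=
      ⟨_, totalDegree_eq_zero_iff_eq_C.1 (Nat.le_zero.1 hq.totalDegree_le)⟩
    have := fischer_monomial 0 (C c : MvPolynomial σ ℝ)
    simpa using this
  | succ k ih =>
    rw [pow_succ', fischer_linearForm_mul, ih (isHomogeneous_directionalDeriv x hq),
      eval_directionalDeriv_self x hq, Nat.factorial_succ]
    push_cast
    ring

theorem pderiv_linearForm (x : σ → ℝ) (i : σ) : pderiv i (linearForm x) = C (x i) := by
  classical
  simp [linearForm, pderiv_X, Pi.single_apply]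

theorem pderiv_normSqForm (i : σ) : pderiv i (normSqForm : MvPolynomial σ ℝ) = 2 * X i := by
  classical
  simp [normSqForm, pderiv_X, Pi.single_apply]

theorem directionalDeriv_linearForm_self (x : σ → ℝ) :
    directionalDeriv x (linearForm x) = C (∑ i, x i ^ 2) := by
  simp [directionalDeriv_apply, pderiv_linearForm, sq]

theorem directionalDeriv_normSqForm (x : σ → ℝ) :
    directionalDeriv x normSqForm = 2 * linearForm x := by
  simp only [directionalDeriv_apply, pderiv_normSqForm, linearForm, Finset.mul_sum]
  exact Finset.sum_congr rfl fun i _ => by ring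

theorem laplacian_linearForm_mul (x : σ → ℝ) (q : MvPolynomial σ ℝ) :
    laplacian (linearForm x * q) = linearForm x * laplacian q + 2 * directionalDeriv x q := by
  simp only [laplacian_apply, directionalDeriv_apply, Finset.mul_sum, ← Finset.sum_add_distrib]
  refine Finset.sum_congr rfl fun i _ => ?_
  simp only [pderiv_mul, map_add, pderiv_linearForm, pderiv_C]
  ring

theorem laplacian_normSqForm_mul {k : ℕ} {q : MvPolynomial σ ℝ} (hq : q.IsHomogeneous k) :
    laplacian (normSqForm * q) =
      normSqForm * laplacian q + (4 * k + 2 * Fintype.card σ : MvPolynomial σ ℝ) * q := by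
  have euler : (4 * k + 2 * Fintype.card σ : MvPolynomial σ ℝ) * q =
      ∑ i, (4 * (X i * pderiv i q) + 2 * q) := by
    rw [Finset.sum_add_distrib, ← Finset.mul_sum, hq.sum_X_mul_pderiv]
    simp only [Finset.sum_const, Finset.card_univ, nsmul_eq_mul]
    ring
  simp only [euler, laplacian_apply, Finset.mul_sum, ← Finset.sum_add_distrib]
  refine Finset.sum_congr rfl fun i _ => ?_
  have pderiv_two_mul_X : pderiv i (2 * X i : MvPolynomial σ ℝ) = 2 := by
    rw [← map_ofNat C 2, pderiv_C_mul, pderiv_X_self, mul_one]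
  simp only [pderiv_mul, map_add, pderiv_normSqForm, pderiv_two_mul_X]
  ring

/-- The zonal harmonic of degree `k` with pole `x`. -/
noncomputable def zonalHarmonic (x : σ → ℝ) (a k : ℕ) : MvPolynomial σ ℝ :=
  gegenbauer a (linearForm x) (C (∑ i, x i ^ 2) * normSqForm) k

theorem eval_zonalHarmonic (x y : σ → ℝ) (a k : ℕ) :
    eval y (zonalHarmonic x a k) =
      gegenbauer a (∑ i, x i * y i) ((∑ i, x i ^ 2) * ∑ i, y i ^ 2) k := by
  rw [zonalHarmonic, (isPolyHom_ringHom _).map_gegenbauer]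
  simp [linearForm, normSqForm]

theorem zonalHarmonic_add_two (x : σ → ℝ) (a k : ℕ) :
    zonalHarmonic x a (k + 2) =
      (2 * (k + 1) + a : ℝ) • (linearForm x * zonalHarmonic x a (k + 1)) -
        ((k + 1) * (k + a) * ∑ i, x i ^ 2 : ℝ) • (normSqForm * zonalHarmonic x a k) := by
  simp only [zonalHarmonic, gegenbauer_add_two, smul_eq_C_mul, map_add, map_mul, map_one,
    map_ofNat, map_natCast]
  ring

theorem isHomogeneous_zonalHarmonic (x : σ → ℝ) (a k : ℕ) :
    (zonalHarmonic x a k).IsHomogeneous k := by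
  have const_mul {n : ℕ} {p : MvPolynomial σ ℝ} (c : ℝ) (hp : p.IsHomogeneous n) :
      (C c * p).IsHomogeneous n := by simpa using (isHomogeneous_C σ c).mul hp
  induction k using Nat.twoStepInduction with
  | zero => simpa [zonalHarmonic] using isHomogeneous_one σ ℝ
  | one => simpa [zonalHarmonic] using const_mul a (isHomogeneous_linearForm x)
  | more k ih₀ ih₁ =>
    have leading := const_mul (2 * (k + 1) + a) ((isHomogeneous_linearForm x).mul ih₁)
    have lower := const_mul ((k + 1) * (k + a) * ∑ i, x i ^ 2) (isHomogeneous_normSqForm.mul ih₀)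
    rw [show 1 + (k + 1) = k + 2 by omega] at leading
    rw [show 2 + k = k + 2 by omega] at lower
    rw [zonalHarmonic_add_two, smul_eq_C_mul, smul_eq_C_mul]
    exact leading.sub lower

theorem directionalDeriv_zonalHarmonic (x : σ → ℝ) (a k : ℕ) :
    directionalDeriv x (zonalHarmonic x a (k + 1)) =
      ((k + 1) * (k + a) : MvPolynomial σ ℝ) * C (∑ i, x i ^ 2) * zonalHarmonic x a k := by
  refine derivation_gegenbauer _ (directionalDeriv_linearForm_self x) ?_ a k
  rw [← smul_eq_C_mul, Derivation.map_smul, directionalDeriv_normSqForm, smul_eq_C_mul]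
  ring

theorem laplacian_zonalHarmonic (x : σ → ℝ) {a : ℕ} (ha : Fintype.card σ = a + 2) (k : ℕ) :
    laplacian (zonalHarmonic x a k) = 0 := by
  induction k using Nat.twoStepInduction with
  | zero => simp [zonalHarmonic, laplacian_apply]
  | one => simp [zonalHarmonic, laplacian_apply, pderiv_linearForm]
  | more k ih₀ ih₁ =>
    rw [zonalHarmonic_add_two, map_sub, map_smul, map_smul, laplacian_linearForm_mul,
      laplacian_normSqForm_mul (isHomogeneous_zonalHarmonic x a k), ih₀, ih₁,
      directionalDeriv_zonalHarmonic, ha]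
    simp only [smul_eq_C_mul, map_add, map_mul, map_one, map_ofNat, map_natCast, Nat.cast_add,
      Nat.cast_ofNat]
    ring

-- A harmonic `h` is orthogonal to all multiples of `normSqForm`: only the leading term remains.
theorem fischer_zonalHarmonic_of_harmonic (x : σ → ℝ) (a : ℕ) {k : ℕ} {h : MvPolynomial σ ℝ}
    (hom : h.IsHomogeneous k) (harmonic : laplacian h = 0) :
    fischer (zonalHarmonic x a k) h = gegenbauerLeadingCoeff a k * k.factorial * eval x h := by
  obtain ⟨g, hg⟩ := exists_gegenbauer_eq_add_mul a (linearForm x) (C (∑ i, x i ^ 2) * normSqForm) k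
  have split : zonalHarmonic x a k = (gegenbauerLeadingCoeff a k : ℝ) • linearForm x ^ k +
      normSqForm * (C (∑ i, x i ^ 2) * g) := by
    rw [zonalHarmonic, hg, smul_eq_C_mul, map_natCast]
    ring
  rw [split, map_add, LinearMap.add_apply, fischer_normSqForm_mul, harmonic, map_zero, add_zero,
    map_smul, LinearMap.smul_apply, fischer_linearForm_pow x hom, smul_eq_mul, mul_assoc]

theorem sum_sum_gegenbauer_nonneg_of_card {ι : Type*} (s : Finset ι) {a : ℕ} (ha : 0 < a)
    (hσ : Fintype.card σ = a + 2) (v : ι → σ → ℝ) (c : ι → ℝ) (k : ℕ) :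
    0 ≤ ∑ i ∈ s, ∑ j ∈ s, c i * c j *
      gegenbauer a (∑ t, v i t * v j t) ((∑ t, v i t ^ 2) * ∑ t, v j t ^ 2) k := by
  set h : MvPolynomial σ ℝ := ∑ j ∈ s, c j • zonalHarmonic (v j) a k with h_def
  have hom : h.IsHomogeneous k := IsHomogeneous.sum _ _ _ fun j _ => by
    simpa [smul_eq_C_mul] using
      (isHomogeneous_C σ (c j)).mul (isHomogeneous_zonalHarmonic (v j) a k)
  have harmonic : laplacian h = 0 := by
    simp only [h_def, map_sum, map_smul, laplacian_zonalHarmonic _ hσ, smul_zero,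
      Finset.sum_const_zero]
  have norm_h : fischer h h =
      gegenbauerLeadingCoeff a k * k.factorial * ∑ i ∈ s, c i * eval (v i) h := by
    have expand (q : MvPolynomial σ ℝ) :
        fischer h q = ∑ i ∈ s, c i * fischer (zonalHarmonic (v i) a k) q := by
      simp only [h_def, map_sum, LinearMap.sum_apply, map_smul, LinearMap.smul_apply, smul_eq_mul]
    rw [expand, Finset.mul_sum]
    refine Finset.sum_congr rfl fun i _ => ?_
    rw [fischer_zonalHarmonic_of_harmonic _ _ hom harmonic]
    ring
  have eval_h : ∑ i ∈ s, c i * eval (v i) h = ∑ i ∈ s, ∑ j ∈ s, c i * c j *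
      gegenbauer a (∑ t, v i t * v j t) ((∑ t, v i t ^ 2) * ∑ t, v j t ^ 2) k := by
    refine Finset.sum_congr rfl fun i _ => ?_
    rw [h_def, map_sum, Finset.mul_sum]
    refine Finset.sum_congr rfl fun j _ => ?_
    rw [smul_eval, eval_zonalHarmonic, mul_assoc, mul_comm (∑ t, v j t ^ 2)]
    simp only [mul_comm (v j _) (v i _)]
  rw [← eval_h]
  refine nonneg_of_mul_nonneg_right (norm_h ▸ fischer_self_nonneg h) ?_
  have leading_pos : 0 < gegenbauerLeadingCoeff a k := Finset.prod_pos fun i _ => by omega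
  positivity

end Fischer

section InnerProductSpace

open Module
open scoped RealInnerProductSpace

variable {E ι : Type*} [NormedAddCommGroup E] [InnerProductSpace ℝ E]

theorem sum_sum_gegenbauer_inner_nonneg {a : ℕ} (ha : 0 < a) (hE : finrank ℝ E = a + 2)
    (s : Finset ι) (v : ι → E) (c : ι → ℝ) (k : ℕ) :
    0 ≤ ∑ i ∈ s, ∑ j ∈ s, c i * c j * gegenbauer a ⟪v i, v j⟫ (‖v i‖ ^ 2 * ‖v j‖ ^ 2) k := by
  have : FiniteDimensional ℝ E := .of_finrank_pos (by omega)
  let b := stdOrthonormalBasis ℝ E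
  have inner_eq (x y : E) : ∑ t, ⟪b t, x⟫ * ⟪b t, y⟫ = ⟪x, y⟫ := by
    rw [← b.sum_inner_mul_inner x y]
    exact Finset.sum_congr rfl fun t _ => by rw [real_inner_comm]
  have norm_eq (x : E) : ∑ t, ⟪b t, x⟫ ^ 2 = ‖x‖ ^ 2 := by
    simp only [sq, inner_eq, real_inner_self_eq_norm_mul_norm]
  simpa only [inner_eq, norm_eq] using sum_sum_gegenbauer_nonneg_of_card s ha
    ((Fintype.card_fin _).trans hE) (fun i t => ⟪b t, v i⟫) c k

theorem sum_sum_gegenbauer_orthogonal_nonneg {a : ℕ} (ha : 0 < a) (hE : finrank ℝ E = a + 3)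
    {z : E} (hz : ‖z‖ = 1) (s : Finset ι) (v : ι → E) (c : ι → ℝ) (k : ℕ) :
    0 ≤ ∑ i ∈ s, ∑ j ∈ s, c i * c j * gegenbauer a (⟪v i, v j⟫ - ⟪v i, z⟫ * ⟪v j, z⟫)
      ((‖v i‖ ^ 2 - ⟪v i, z⟫ ^ 2) * (‖v j‖ ^ 2 - ⟪v j, z⟫ ^ 2)) k := by
  have hzz : ⟪z, z⟫ = 1 := inner_self_eq_one_of_norm_eq_one hz
  have : Fact (finrank ℝ E = a + 2 + 1) := ⟨hE⟩
  have finrank_orthogonal : finrank ℝ (ℝ ∙ z)ᗮ = a + 2 :=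
    Submodule.finrank_orthogonal_span_singleton (norm_ne_zero_iff.1 (hz ▸ one_ne_zero))
  let proj (x : E) : (ℝ ∙ z)ᗮ := ⟨x - ⟪x, z⟫ • z, by
    rw [Submodule.mem_orthogonal_singleton_iff_inner_right, inner_sub_right, inner_smul_right, hzz,
      real_inner_comm, mul_one, sub_self]⟩
  have inner_proj (x y : E) : ⟪proj x, proj y⟫ = ⟪x, y⟫ - ⟪x, z⟫ * ⟪y, z⟫ := by
    simp only [proj, Submodule.coe_inner, inner_sub_left, inner_sub_right, real_inner_smul_left,
      real_inner_smul_right, hzz, real_inner_comm y z]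
    ring
  have norm_proj (x : E) : ‖proj x‖ ^ 2 = ‖x‖ ^ 2 - ⟪x, z⟫ ^ 2 := by
    rw [← real_inner_self_eq_norm_sq, inner_proj, real_inner_self_eq_norm_sq, sq ⟪x, z⟫]
  simpa only [inner_proj, norm_proj] using
    sum_sum_gegenbauer_inner_nonneg ha finrank_orthogonal s (fun i => proj (v i)) c k

theorem gram_det_nonneg {p q r : E} (hp : ‖p‖ = 1) (hq : ‖q‖ = 1) (hr : ‖r‖ = 1) :
    0 ≤ 1 + 2 * ⟪p, q⟫ * ⟪p, r⟫ * ⟪q, r⟫ - ⟪p, q⟫ ^ 2 - ⟪p, r⟫ ^ 2 - ⟪q, r⟫ ^ 2 := by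
  have cauchy_schwarz := real_inner_mul_inner_self_le (q - ⟪p, q⟫ • p) (r - ⟪p, r⟫ • p)
  simp only [inner_sub_left, inner_sub_right, real_inner_smul_left, real_inner_smul_right,
    inner_self_eq_one_of_norm_eq_one hp, inner_self_eq_one_of_norm_eq_one hq,
    inner_self_eq_one_of_norm_eq_one hr, real_inner_comm p q, real_inner_comm p r]
    at cauchy_schwarz
  linarith

end InnerProductSpace

/-! ### The three-point bound -/

section PositiveKernel

variable {ι : Type*} {s : Finset ι} {K L : ι → ι → ℝ}

/-- The kernel `K` is positive semidefinite on `s`, without requiring symmetry. -/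
def IsPosKernelOn (s : Finset ι) (K : ι → ι → ℝ) : Prop :=
  ∀ c : ι → ℝ, 0 ≤ ∑ i ∈ s, ∑ j ∈ s, c i * c j * K i j

namespace IsPosKernelOn

theorem sum_sum_nonneg (hK : IsPosKernelOn s K) : 0 ≤ ∑ i ∈ s, ∑ j ∈ s, K i j := by
  simpa using hK 1

theorem zero : IsPosKernelOn s fun _ _ => 0 := fun c => by simp

theorem add (hK : IsPosKernelOn s K) (hL : IsPosKernelOn s L) :
    IsPosKernelOn s fun i j => K i j + L i j := fun c => by
  simpa only [mul_add, Finset.sum_add_distrib] using add_nonneg (hK c) (hL c)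

theorem const_mul (hK : IsPosKernelOn s K) {a : ℝ} (ha : 0 ≤ a) :
    IsPosKernelOn s fun i j => a * K i j := fun c => by
  simpa only [Finset.mul_sum, mul_left_comm a] using mul_nonneg ha (hK c)

theorem mul_mul (hK : IsPosKernelOn s K) (f : ι → ℝ) :
    IsPosKernelOn s fun i j => f i * f j * K i j := fun c => by
  refine (hK fun i => c i * f i).trans_eq ?_
  exact Finset.sum_congr rfl fun i _ => Finset.sum_congr rfl fun j _ => by ring

end IsPosKernelOn

end PositiveKernel

section ThreePointBound

variable {α : Type*} [DecidableEq α] {S : Finset α}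

theorem sum_erase_sum_erase_sum_erase_nonpos {g : α → α → α → ℝ}
    (hg : ∀ p ∈ S, ∀ q ∈ S, ∀ r ∈ S, p ≠ q → p ≠ r → q ≠ r → g q r p + g p r q + g p q r ≤ 0) :
    ∑ z ∈ S, ∑ y ∈ S.erase z, ∑ y' ∈ (S.erase z).erase y, g y y' z ≤ 0 := by
  let distinctSum (f : α → α → α → ℝ) : ℝ :=
    ∑ p ∈ S, ∑ q ∈ S, ∑ r ∈ S, if p ≠ q ∧ p ≠ r ∧ q ≠ r then f p q r else 0
  have distinctSum_swap_left (f : α → α → α → ℝ) :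
      distinctSum (fun p q r => f q p r) = distinctSum f := by
    simp only [distinctSum]
    rw [Finset.sum_comm]
    refine Finset.sum_congr rfl fun p _ => Finset.sum_congr rfl fun q _ =>
      Finset.sum_congr rfl fun r _ => if_congr (by tauto) rfl rfl
  have distinctSum_swap_right (f : α → α → α → ℝ) :
      distinctSum (fun p q r => f p r q) = distinctSum f := by
    refine Finset.sum_congr rfl fun p _ => ?_
    rw [Finset.sum_comm]
    refine Finset.sum_congr rfl fun q _ => Finset.sum_congr rfl fun r _ =>
      if_congr (by tauto) rfl rfl
  have distinctSum_eq : distinctSum (fun p q r => g q r p) =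
      ∑ z ∈ S, ∑ y ∈ S.erase z, ∑ y' ∈ (S.erase z).erase y, g y y' z := by
    simp only [distinctSum, ← Finset.filter_ne', Finset.sum_filter]
    refine Finset.sum_congr rfl fun p _ => Finset.sum_congr rfl fun q _ => ?_
    by_cases hpq : p = q
    · simp [hpq]
    · rw [if_pos (Ne.symm hpq)]
      refine Finset.sum_congr rfl fun r _ => ?_
      simp only [hpq, ne_comm (a := r), ← ite_and, ne_eq, not_false_eq_true, true_and]
  have symmetrised : distinctSum (fun p q r => g q r p + g p r q + g p q r) ≤ 0 :=
    Finset.sum_nonpos fun p hp => Finset.sum_nonpos fun q hq => Finset.sum_nonpos fun r hr => by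
      split_ifs with h
      exacts [hg p hp q hq r hr h.1 h.2.1 h.2.2, le_rfl]
  have expand : distinctSum (fun p q r => g q r p + g p r q + g p q r) =
      distinctSum (fun p q r => g q r p) + distinctSum (fun p q r => g p r q) +
        distinctSum (fun p q r => g p q r) := by
    simp only [distinctSum, ← Finset.sum_add_distrib, ite_add_zero]
  have rotate := distinctSum_swap_left fun p q r => g p r q
  have swap := distinctSum_swap_right fun p q r => g p q r
  linarith

theorem sum_sum_erase_eq_diag_add {z : α} (g : α → α → ℝ) :
    ∑ y ∈ S.erase z, ∑ y' ∈ S.erase z, g y y' =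
      ∑ y ∈ S.erase z, g y y + ∑ y ∈ S.erase z, ∑ y' ∈ (S.erase z).erase y, g y y' := by
  rw [← Finset.sum_add_distrib]
  exact Finset.sum_congr rfl fun y hy => (Finset.add_sum_erase _ _ hy).symm

theorem card_sub_one_mul_le_of_three_point {g : α → α → α → ℝ} {φ h : α → α → ℝ}
    {c w M H : ℝ} (hS : S.Nonempty) (hc : 0 ≤ c)
    (sq_le : ∀ z ∈ S, c * (∑ y ∈ S.erase z, φ y z) ^ 2 ≤
      ∑ y ∈ S.erase z, ∑ y' ∈ S.erase z, g y y' z)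
    (sum_h : 0 ≤ ∑ z ∈ S, ∑ y ∈ S, h y z) (diag_h : ∀ z ∈ S, h z z = H)
    (triple : ∀ p ∈ S, ∀ q ∈ S, ∀ r ∈ S, p ≠ q → p ≠ r → q ≠ r →
      g q r p + g p r q + g p q r ≤ 0)
    (pair : ∀ z ∈ S, ∀ y ∈ S, y ≠ z → g y y z + 2 * c * w * φ y z + h y z ≤ -M) :
    (S.card - 1) * M ≤ c * w ^ 2 + H := by
  have triple_sum := sum_erase_sum_erase_sum_erase_nonpos triple
  have pair_sum : ∀ z ∈ S, ∑ y ∈ S.erase z, (g y y z + 2 * c * w * φ y z + h y z) ≤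
      -((S.card - 1) * M) := fun z hz => by
    have := Finset.sum_le_card_nsmul (S.erase z) _ _ fun y hy =>
      pair z hz y (Finset.mem_of_mem_erase hy) (Finset.ne_of_mem_erase hy)
    rwa [nsmul_eq_mul, Finset.cast_card_erase_of_mem hz, mul_neg] at this
  -- Completing the square bounds the linear term in `φ` by the three-point kernel.
  have point_sum : ∀ z ∈ S, ∑ y ∈ S, h y z ≤ c * w ^ 2 + H - (S.card - 1) * M +
      ∑ y ∈ S.erase z, ∑ y' ∈ (S.erase z).erase y, g y y' z := fun z hz => by
    have square := mul_nonneg hc (sq_nonneg (∑ y ∈ S.erase z, φ y z + w))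
    have kernel := sq_le z hz
    rw [sum_sum_erase_eq_diag_add] at kernel
    have sums := pair_sum z hz
    rw [Finset.sum_add_distrib, Finset.sum_add_distrib, ← Finset.mul_sum] at sums
    rw [← Finset.add_sum_erase _ _ hz, diag_h z hz]
    linarith
  have total := sum_h.trans (Finset.sum_le_sum point_sum)
  rw [Finset.sum_add_distrib, Finset.sum_const, nsmul_eq_mul] at total
  have card_pos : (0 : ℝ) < S.card := by exact_mod_cast hS.card_pos
  exact sub_nonneg.1 (nonneg_of_mul_nonneg_right (by linarith) card_pos)

end ThreePointBound

/-! ### Integers packed into the digits of a natural number -/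

section PackedWords

/-- The natural number whose lowest `n` digits in base `2 ^ w` are `f 0, …, f (n - 1)`. A whole
array is stored in one number so that single big-number operations act on all its entries. -/
def pack (w : ℕ) (f : ℕ → ℕ) : ℕ → ℕ
  | 0 => 0
  | n + 1 => pack w f n + 2 ^ (w * n) * f n

theorem pack_congr {w n : ℕ} {f g : ℕ → ℕ} (h : ∀ i < n, f i = g i) : pack w f n = pack w g n := by
  induction n with
  | zero => rfl
  | succ n ih => rw [pack, pack, ih fun i hi => h i (by omega), h n (by omega)]

theorem pack_add (w : ℕ) (f g : ℕ → ℕ) (n : ℕ) :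
    pack w f n + pack w g n = pack w (fun i => f i + g i) n := by
  induction n with
  | zero => rfl
  | succ n ih => rw [pack, pack, pack, ← ih]; ring

theorem pack_eq_sum (w : ℕ) (f : ℕ → ℕ) (n : ℕ) :
    pack w f n = ∑ j ∈ Finset.range n, f j * 2 ^ (w * j) := by
  induction n with
  | zero => rfl
  | succ n ih => rw [pack, ih, Finset.sum_range_succ, mul_comm (f n)]

theorem pack_lt {w n : ℕ} {f : ℕ → ℕ} (hf : ∀ i < n, f i < 2 ^ w) : pack w f n < 2 ^ (w * n) := by
  induction n with
  | zero => simp [pack]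
  | succ n ih =>
    have low := ih fun i hi => hf i (by omega)
    have high := Nat.mul_le_mul_left (2 ^ (w * n)) (hf n (by omega))
    rw [pack, Nat.mul_succ, pow_add]
    rw [Nat.mul_succ] at high
    omega

theorem pack_add_right (w : ℕ) (f : ℕ → ℕ) (m n : ℕ) :
    pack w f (m + n) = pack w f m + 2 ^ (w * m) * pack w (fun i => f (m + i)) n := by
  induction n with
  | zero => simp [pack]
  | succ n ih => rw [← Nat.add_assoc, pack, ih, pack, Nat.mul_add, pow_add]; ring

theorem pack_mul (w k : ℕ) (f : ℕ → ℕ) (m : ℕ) :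
    pack w f (m * k) = pack (w * k) (fun i => pack w (fun j => f (i * k + j)) k) m := by
  induction m with
  | zero => simp [pack]
  | succ m ih => rw [Nat.succ_mul, pack_add_right, ih, pack, mul_right_comm w k m, mul_assoc w m k]

theorem pack_div_mod {w n i : ℕ} {f : ℕ → ℕ} (hf : ∀ i < n, f i < 2 ^ w) (hi : i < n) :
    pack w f n / 2 ^ (w * i) % 2 ^ w = f i := by
  obtain ⟨r, rfl⟩ : ∃ r, n = i + 1 + r := ⟨n - (i + 1), by omega⟩
  have low : pack w f i < 2 ^ (w * i) := pack_lt fun j hj => hf j (by omega)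
  rw [pack_add_right, pack, Nat.mul_succ, pow_add, mul_assoc, add_assoc, ← mul_add,
    Nat.add_mul_div_left _ _ (by positivity), Nat.div_eq_of_lt low, zero_add,
    Nat.add_mul_mod_self_left, Nat.mod_eq_of_lt (hf i hi)]

theorem testBit_pack {w n : ℕ} {f : ℕ → ℕ} (hw : 0 < w) (hf : ∀ i < n, f i < 2 ^ w) (b : ℕ) :
    (pack w f n).testBit b = (decide (b / w < n) && (f (b / w)).testBit (b % w)) := by
  by_cases hb : b / w < n
  · simp only [hb, decide_true, Bool.true_and]
    rw [← pack_div_mod hf hb, Nat.testBit_mod_two_pow, Nat.testBit_div_two_pow, Nat.mod_add_div]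
    simp only [Nat.mod_lt _ hw, decide_true, Bool.true_and]
  · have overflow : w * n ≤ b := mul_comm n w ▸ (Nat.le_div_iff_mul_le hw).1 (not_lt.1 hb)
    rw [Nat.testBit_lt_two_pow ((pack_lt hf).trans_le (Nat.pow_le_pow_right two_pos overflow))]
    simp [hb]

/-- The number whose lowest `n` digits in base `2 ^ p` are all `2 ^ b - 1`. -/
def periodicMask (b p n : ℕ) : ℕ := (2 ^ b - 1) * ((2 ^ (p * n) - 1) / (2 ^ p - 1))

theorem pack_const {w n : ℕ} (hw : 0 < w) (c : ℕ) :
    pack w (fun _ => c) n = c * ((2 ^ (w * n) - 1) / (2 ^ w - 1)) := by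
  rw [pow_mul, ← Nat.geomSum_eq (Nat.one_lt_two_pow hw.ne')]
  induction n with
  | zero => rfl
  | succ n ih => rw [pack, ih, Finset.sum_range_succ, mul_add, pow_mul, mul_comm c (_ ^ n)]

theorem testBit_periodicMask {b p : ℕ} (hp : 0 < p) (hb : b ≤ p) (n i : ℕ) :
    (periodicMask b p n).testBit i = (decide (i / p < n) && decide (i % p < b)) := by
  have digit_lt : 2 ^ b - 1 < 2 ^ p :=
    (Nat.sub_lt (by positivity) one_pos).trans_le (Nat.pow_le_pow_right two_pos hb)
  rw [periodicMask, ← pack_const hp, testBit_pack hp fun _ _ => digit_lt,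
    Nat.testBit_two_pow_sub_one]

theorem lt_of_pack_land_periodicMask_eq {n : ℕ} {f : ℕ → ℕ} (hf : ∀ i < n, f i < 2 ^ 64)
    (h : pack 64 f n &&& periodicMask 63 64 n = pack 64 f n) : ∀ j < n, f j < 2 ^ 63 := by
  intro j hj
  have bit := congrArg (Nat.testBit · (64 * j + 63)) h
  simp only [Nat.testBit_land, testBit_periodicMask (b := 63) (p := 64) (by norm_num) (by norm_num),
    testBit_pack (w := 64) (by norm_num) hf, show (64 * j + 63) / 64 = j by omega,
    show (64 * j + 63) % 64 = 63 by omega, lt_irrefl, decide_false, Bool.and_false, hj, decide_true,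
    Bool.true_and] at bit
  refine Nat.lt_pow_two_of_testBit _ fun i hi => ?_
  rcases hi.eq_or_lt with rfl | hi
  · exact bit.symm
  · exact Nat.testBit_lt_two_pow ((hf j hj).trans_le (Nat.pow_le_pow_right two_pos hi))

/-- Selects the 64-bit words `j < n` whose coordinate `j / st % m` is smaller than `r`. -/
def axisMask (st m n r : ℕ) : ℕ := periodicMask (64 * (st * r)) (64 * (st * m)) (n / (st * m))

theorem testBit_axisMask {st m n r : ℕ} (hst : 0 < st) (hm : 0 < m) (hn : st * m ∣ n) (hr : r ≤ m)
    (b : ℕ) : (axisMask st m n r).testBit b =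
      (decide (b / 64 < n) && decide (b / 64 / st % m < r)) := by
  obtain ⟨q, rfl⟩ := hn
  have period_pos : 0 < st * m := Nat.mul_pos hst hm
  rw [axisMask, testBit_periodicMask (by positivity) (by gcongr)]
  congr 2
  · rw [Nat.mul_div_cancel_left q period_pos, ← Nat.div_div_eq_div_mul,
      Nat.div_lt_iff_lt_mul period_pos, mul_comm q]
  · rw [mul_comm 64 (st * r), ← Nat.div_lt_iff_lt_mul (by norm_num), Nat.mod_mul_right_div_self,
      mul_comm st r, ← Nat.div_lt_iff_lt_mul hst, Nat.mod_mul_right_div_self]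

/-- Replaces the 64-bit words of `x` selected by `mask` by their averages with the corresponding
words of `y`, rounded down. Words stay below `2 ^ 63`, so no sum carries into the next word. -/
def averageOn (n mask x y : ℕ) : ℕ :=
  (x ^^^ (x &&& mask)) + ((((x &&& mask) + (y &&& mask)) >>> 1) &&& periodicMask 63 64 n)

/-- `mask` consists of the full 64-bit words `j < n` with `sel j`. -/
def IsWordMask (n mask : ℕ) (sel : ℕ → Prop) [DecidablePred sel] : Prop :=
  ∀ b, mask.testBit b = (decide (b / 64 < n) && decide (sel (b / 64)))

variable {n mask : ℕ} {sel : ℕ → Prop} [DecidablePred sel]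

theorem pack_land_mask {f : ℕ → ℕ} (hf : ∀ i < n, f i < 2 ^ 64) (hmask : IsWordMask n mask sel) :
    pack 64 f n &&& mask = pack 64 (fun i => if sel i then f i else 0) n := by
  refine Nat.eq_of_testBit_eq fun b => ?_
  rw [Nat.testBit_land, testBit_pack (by norm_num) hf, hmask, testBit_pack (by norm_num)
    fun i hi => by split_ifs; exacts [hf i hi, by norm_num]]
  by_cases h : sel (b / 64) <;> by_cases hb : b / 64 < n <;> simp [h, hb]

theorem pack_xor_land_mask {f : ℕ → ℕ} (hf : ∀ i < n, f i < 2 ^ 64)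
    (hmask : IsWordMask n mask sel) :
    pack 64 f n ^^^ (pack 64 f n &&& mask) = pack 64 (fun i => if sel i then 0 else f i) n := by
  refine Nat.eq_of_testBit_eq fun b => ?_
  rw [Nat.testBit_xor, Nat.testBit_land, testBit_pack (by norm_num) hf, hmask,
    testBit_pack (by norm_num) fun i hi => by split_ifs; exacts [by norm_num, hf i hi]]
  by_cases h : sel (b / 64) <;> by_cases hb : b / 64 < n <;> simp [h, hb]

theorem pack_shiftRight_one_land_mask {f : ℕ → ℕ} (hf : ∀ i < n, f i < 2 ^ 64) :
    (pack 64 f n >>> 1) &&& periodicMask 63 64 n = pack 64 (fun i => f i / 2) n := by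
  have half_lt : ∀ i < n, f i / 2 < 2 ^ 63 := fun i hi => by have := hf i hi; omega
  refine Nat.eq_of_testBit_eq fun b => ?_
  rw [Nat.testBit_land, Nat.testBit_shiftRight, testBit_pack (by norm_num) hf,
    testBit_periodicMask (by norm_num) (by norm_num),
    testBit_pack (by norm_num) fun i hi => (half_lt i hi).trans (by norm_num), Nat.testBit_div_two]
  by_cases hb : b % 64 < 63
  · rw [show (1 + b) / 64 = b / 64 by omega, show (1 + b) % 64 = b % 64 + 1 by omega]
    by_cases hn : b / 64 < n <;> simp [hb, hn]
  · by_cases hn : b / 64 < n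
    · have := Nat.testBit_lt_two_pow (half_lt _ hn)
      rw [Nat.testBit_div_two] at this
      simp [show b % 64 = 63 by omega, this]
    · simp [hn]

theorem averageOn_pack {f g : ℕ → ℕ} {y : ℕ} (hf : ∀ i < n, f i < 2 ^ 63)
    (hg : ∀ i < n, g i < 2 ^ 63) (hmask : IsWordMask n mask sel)
    (hy : y &&& mask = pack 64 (fun i => if sel i then g i else 0) n) :
    averageOn n mask (pack 64 f n) y =
      pack 64 (fun i => if sel i then (f i + g i) / 2 else f i) n := by
  have word : ∀ i < n, f i < 2 ^ 64 := fun i hi => (hf i hi).trans (by norm_num)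
  rw [averageOn, pack_xor_land_mask word hmask, pack_land_mask word hmask, hy, pack_add,
    pack_shiftRight_one_land_mask, pack_add]
  · refine pack_congr fun i _ => ?_
    by_cases h : sel i <;> simp [h]
  · intro i hi
    have := hf i hi
    have := hg i hi
    split_ifs <;> omega

theorem pack_shiftLeft_land_mask {f : ℕ → ℕ} {k : ℕ} (hf : ∀ i < n, f i < 2 ^ 64)
    (hmask : IsWordMask n mask sel) (hsel : ∀ i, sel i → k ≤ i) :
    (pack 64 f n <<< (64 * k)) &&& mask = pack 64 (fun i => if sel i then f (i - k) else 0) n := by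
  refine Nat.eq_of_testBit_eq fun b => ?_
  rw [Nat.testBit_land, Nat.testBit_shiftLeft, testBit_pack (by norm_num) hf, hmask,
    testBit_pack (by norm_num) fun i hi => by split_ifs; exacts [hf _ (by omega), by norm_num]]
  by_cases h : sel (b / 64)
  · have := hsel _ h
    by_cases hn : b / 64 < n
    · simp [h, hn, show 64 * k ≤ b by omega, show (b - 64 * k) / 64 = b / 64 - k by omega,
        show (b - 64 * k) % 64 = b % 64 by omega, show b / 64 - k < n by omega]
    · simp [hn]
  · simp [h]

theorem pack_shiftRight_land_mask {f : ℕ → ℕ} {k : ℕ} (hf : ∀ i < n, f i < 2 ^ 64)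
    (hmask : IsWordMask n mask sel) (hsel : ∀ i < n, sel i → i + k < n) :
    (pack 64 f n >>> (64 * k)) &&& mask = pack 64 (fun i => if sel i then f (i + k) else 0) n := by
  refine Nat.eq_of_testBit_eq fun b => ?_
  rw [Nat.testBit_land, Nat.testBit_shiftRight, testBit_pack (by norm_num) hf, hmask,
    testBit_pack (by norm_num) fun i hi => by
      split_ifs with h; exacts [hf _ (hsel i hi h), by norm_num],
    Nat.mul_add_mod, Nat.mul_add_div (by norm_num)]
  by_cases h : sel (b / 64)
  · by_cases hn : b / 64 < n
    · simp [h, hn, add_comm k, hsel _ hn h]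
    · simp [hn]
  · simp [h]

end PackedWords

/-! ### Bernstein coefficients and subdivision -/

section BernsteinGrid

open Finset

/-- The number of entries of a coefficient tensor of multidegree `degs`; the entries are numbered
lexicographically, the first axis varying slowest. -/
def gridSize : List ℕ → ℕ
  | [] => 1
  | d :: ds => (d + 1) * gridSize ds

/-- The sum of the entries `f j` of a coefficient tensor, each weighted by the product over the axes
of the basis functions `B d i` at the coordinates of `v`. -/
def gridSum (B : ℕ → ℕ → ℝ → ℝ) : List ℕ → (ℕ → ℝ) → (ℕ → ℝ) → ℝ
  | [], f, _ => f 0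
  | d :: ds, f, v => ∑ i ∈ range (d + 1),
      B d i (v 0) * gridSum B ds (fun j => f (i * gridSize ds + j)) fun k => v (k + 1)

/-- The unit cube; only the coordinates of the axes in use matter. -/
def unitCube : Set (ℕ → ℝ) := Set.Icc 0 1

/-- The homogenised monomial basis of degree `d`. -/
def powerBasis (d i : ℕ) (x : ℝ) : ℝ := x ^ i * (1 - x) ^ (d - i)

/-- The Bernstein basis of degree `d`. -/
def bernsteinBasis (d i : ℕ) (x : ℝ) : ℝ := d.choose i * powerBasis d i x

/-- The distance in a tensor between neighbouring entries along the axis `a`. -/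
def axisStride (degs : List ℕ) (a : ℕ) : ℕ := gridSize (degs.drop (a + 1))

/-- The index along the axis `a` of the entry number `j`. -/
def axisCoord (degs : List ℕ) (a j : ℕ) : ℕ := j / axisStride degs a % (degs.getD a 0 + 1)

theorem gridSize_pos (degs : List ℕ) : 0 < gridSize degs := by
  induction degs with
  | nil => exact one_pos
  | cons d ds ih => exact Nat.mul_pos d.succ_pos ih

theorem axisStride_mul_dvd (degs : List ℕ) (a : ℕ) :
    axisStride degs a * (degs.getD a 0 + 1) ∣ gridSize degs := by
  induction degs generalizing a with
  | nil => simp [axisStride, gridSize]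
  | cons d ds ih =>
    cases a with
    | zero => simp [axisStride, gridSize, mul_comm]
    | succ a => exact (ih a).mul_left (d + 1)

theorem shift_mem_unitCube {v : ℕ → ℝ} (hv : v ∈ unitCube) : (fun k => v (k + 1)) ∈ unitCube :=
  ⟨fun k => hv.1 (k + 1), fun k => hv.2 (k + 1)⟩

theorem update_mem_unitCube {v : ℕ → ℝ} (hv : v ∈ unitCube) (a : ℕ) {x : ℝ} (h0 : 0 ≤ x)
    (h1 : x ≤ 1) : Function.update v a x ∈ unitCube := by
  constructor <;> intro k <;> by_cases hk : k = a
  · simpa [hk] using h0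
  · simpa [hk] using hv.1 k
  · simpa [hk] using h1
  · simpa [hk] using hv.2 k

theorem powerBasis_nonneg (d i : ℕ) (x : ℝ) (h0 : 0 ≤ x) (h1 : x ≤ 1) : 0 ≤ powerBasis d i x :=
  mul_nonneg (pow_nonneg h0 _) (pow_nonneg (sub_nonneg.2 h1) _)

theorem bernsteinBasis_nonneg (d i : ℕ) (x : ℝ) (h0 : 0 ≤ x) (h1 : x ≤ 1) :
    0 ≤ bernsteinBasis d i x :=
  mul_nonneg (Nat.cast_nonneg _) (powerBasis_nonneg d i x h0 h1)

theorem block_index_lt {i d P j : ℕ} (hi : i ∈ range (d + 1)) (hj : j < P) :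
    i * P + j < (d + 1) * P := by
  have := Nat.mul_le_mul_right P (mem_range.1 hi)
  rw [Nat.succ_mul] at this
  omega

theorem block_index_div {P j : ℕ} (hj : j < P) (i : ℕ) : (i * P + j) / P = i := by
  rw [mul_comm, Nat.mul_add_div (by omega), Nat.div_eq_of_lt hj, add_zero]

theorem block_index_mod {P j : ℕ} (hj : j < P) (i : ℕ) : (i * P + j) % P = j := by
  rw [mul_comm, Nat.mul_add_mod, Nat.mod_eq_of_lt hj]

theorem block_index_eq_iff {P i j i' j' : ℕ} (hj : j < P) (hj' : j' < P) :
    i * P + j = i' * P + j' ↔ i = i' ∧ j = j' := by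
  refine ⟨fun h => ⟨?_, ?_⟩, fun ⟨hi, hj⟩ => hi ▸ hj ▸ rfl⟩
  · rw [← block_index_div hj i, h, block_index_div hj']
  · rw [← block_index_mod hj i, h, block_index_mod hj']

theorem gridSum_congr (B : ℕ → ℕ → ℝ → ℝ) {degs : List ℕ} {f g : ℕ → ℝ} (v : ℕ → ℝ)
    (h : ∀ j < gridSize degs, f j = g j) : gridSum B degs f v = gridSum B degs g v := by
  induction degs generalizing f g v with
  | nil => exact h 0 one_pos
  | cons d ds ih =>
    refine sum_congr rfl fun i hi => ?_
    rw [ih _ fun j hj => h _ (block_index_lt hi hj)]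

theorem gridSum_mono {B : ℕ → ℕ → ℝ → ℝ} (hB : ∀ d i x, 0 ≤ x → x ≤ 1 → 0 ≤ B d i x)
    {degs : List ℕ} {f g : ℕ → ℝ} {v : ℕ → ℝ} (hv : v ∈ unitCube)
    (h : ∀ j < gridSize degs, f j ≤ g j) : gridSum B degs f v ≤ gridSum B degs g v := by
  induction degs generalizing f g v with
  | nil => exact h 0 one_pos
  | cons d ds ih =>
    refine sum_le_sum fun i hi => mul_le_mul_of_nonneg_left ?_ (hB d i _ (hv.1 0) (hv.2 0))
    exact ih (shift_mem_unitCube hv) fun j hj => h _ (block_index_lt hi hj)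

theorem gridSum_sum_mul (B : ℕ → ℕ → ℝ → ℝ) (degs : List ℕ) {κ : Type*} (s : Finset κ)
    (c : κ → ℝ) (f : κ → ℕ → ℝ) (v : ℕ → ℝ) :
    gridSum B degs (fun j => ∑ k ∈ s, c k * f k j) v =
      ∑ k ∈ s, c k * gridSum B degs (f k) v := by
  induction degs generalizing f v with
  | nil => rfl
  | cons d ds ih =>
    simp only [gridSum, ih, mul_sum]
    rw [sum_comm]
    exact sum_congr rfl fun k _ => sum_congr rfl fun i _ => mul_left_comm _ _ _

theorem gridSum_const_mul (B : ℕ → ℕ → ℝ → ℝ) (degs : List ℕ) (c : ℝ) (f : ℕ → ℝ) (v : ℕ → ℝ) :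
    gridSum B degs (fun j => c * f j) v = c * gridSum B degs f v := by
  simpa using gridSum_sum_mul B degs {()} (fun _ => c) (fun _ => f) v

theorem axisCoord_cons_succ (d : ℕ) {ds : List ℕ} (a i j : ℕ) :
    axisCoord (d :: ds) (a + 1) (i * gridSize ds + j) = axisCoord ds a j := by
  obtain ⟨q, hq⟩ := axisStride_mul_dvd ds a
  have hst : 0 < axisStride ds a := gridSize_pos _
  change (i * gridSize ds + j) / axisStride ds a % (ds.getD a 0 + 1) = _
  rw [hq, show i * (axisStride ds a * (ds.getD a 0 + 1) * q) + j =
    j + axisStride ds a * ((ds.getD a 0 + 1) * (q * i)) by ring, Nat.add_mul_div_left _ _ hst,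
    Nat.add_mul_mod_self_left]
  rfl

theorem axisStride_mul_axisCoord_le (degs : List ℕ) (a j : ℕ) :
    axisStride degs a * axisCoord degs a j ≤ j :=
  (Nat.mul_le_mul_left _ (Nat.mod_le _ _)).trans (Nat.mul_div_le _ _)

/-- The entries met when moving from the entry number `j` along the axis `a`, from the start of that
axis. -/
def axisSlice (degs : List ℕ) (a : ℕ) (f : ℕ → ℝ) (j k : ℕ) : ℝ :=
  f (j - axisStride degs a * axisCoord degs a j + axisStride degs a * k)

theorem axisCoord_cons_zero {d : ℕ} {ds : List ℕ} {i l : ℕ} (hi : i ∈ range (d + 1))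
    (hl : l < gridSize ds) : axisCoord (d :: ds) 0 (i * gridSize ds + l) = i := by
  change (i * gridSize ds + l) / gridSize ds % (d + 1) = i
  rw [block_index_div hl, Nat.mod_eq_of_lt (mem_range.1 hi)]

theorem axisSlice_cons_zero {d : ℕ} {ds : List ℕ} (f : ℕ → ℝ) {i l : ℕ} (hi : i ∈ range (d + 1))
    (hl : l < gridSize ds) :
    axisSlice (d :: ds) 0 f (i * gridSize ds + l) = fun k => f (k * gridSize ds + l) := by
  funext k
  rw [axisSlice, axisCoord_cons_zero hi hl]
  change f (i * gridSize ds + l - gridSize ds * i + gridSize ds * k) = _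
  rw [mul_comm i, Nat.add_sub_cancel_left, mul_comm k, add_comm]

theorem axisSlice_cons_succ (d : ℕ) (ds : List ℕ) (a : ℕ) (f : ℕ → ℝ) (i l : ℕ) :
    axisSlice (d :: ds) (a + 1) f (i * gridSize ds + l) =
      axisSlice ds a (fun j => f (i * gridSize ds + j)) l := by
  funext k
  have := axisStride_mul_axisCoord_le ds a l
  rw [axisSlice, axisSlice, axisCoord_cons_succ]
  change f (i * gridSize ds + l - axisStride ds a * _ + axisStride ds a * k) = _
  congr 1
  omega

theorem gridSum_axisSlice (degs : List ℕ) (a : ℕ) (W : ℕ → (ℕ → ℝ) → ℝ) {v : ℕ → ℝ} {x : ℝ}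
    (hW : ∀ b : ℕ → ℝ,
      ∑ i ∈ range (degs.getD a 0 + 1), bernsteinBasis (degs.getD a 0) i (v a) * W i b =
        ∑ i ∈ range (degs.getD a 0 + 1), bernsteinBasis (degs.getD a 0) i x * b i)
    (f : ℕ → ℝ) :
    gridSum bernsteinBasis degs (fun j => W (axisCoord degs a j) (axisSlice degs a f j)) v =
      gridSum bernsteinBasis degs f (Function.update v a x) := by
  induction degs generalizing a v f with
  | nil =>
    have := hW (axisSlice [] a f 0)
    simpa [gridSum, axisCoord, axisSlice, axisStride, gridSize, bernsteinBasis, powerBasis]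
      using this
  | cons d ds ih =>
    cases a with
    | zero =>
      calc _ = ∑ i ∈ range (d + 1), bernsteinBasis d i (v 0) *
            gridSum bernsteinBasis ds (fun l => W i fun k => f (k * gridSize ds + l))
              fun k => v (k + 1) :=
            sum_congr rfl fun i hi => congrArg _ <| gridSum_congr _ _ fun l hl => by
              beta_reduce
              rw [axisCoord_cons_zero hi hl, axisSlice_cons_zero f hi hl]
        _ = _ := by
            rw [← gridSum_sum_mul, gridSum, ← gridSum_sum_mul]
            simp only [Function.update_self, Function.update_of_ne (Nat.succ_ne_zero _)]
            exact gridSum_congr _ _ fun l _ => hW _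
    | succ a =>
      have tail : (fun k => Function.update v (a + 1) x (k + 1)) =
          Function.update (fun k => v (k + 1)) a x :=
        Function.update_comp_eq_of_injective v Nat.succ_injective a x
      refine sum_congr rfl fun i _ => ?_
      rw [Function.update_of_ne (Nat.succ_ne_zero a).symm, tail,
        ← ih a (v := fun k => v (k + 1)) hW]
      simp only [axisCoord_cons_succ, axisSlice_cons_succ]

theorem axisCoord_le (degs : List ℕ) (a j : ℕ) : axisCoord degs a j ≤ degs.getD a 0 :=
  Nat.lt_succ_iff.1 (Nat.mod_lt _ (Nat.succ_pos _))

theorem axisCoord_add_stride {degs : List ℕ} {a j : ℕ} (h : axisCoord degs a j < degs.getD a 0) :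
    axisCoord degs a (j + axisStride degs a) = axisCoord degs a j + 1 := by
  have hst : 0 < axisStride degs a := gridSize_pos _
  have room : j / axisStride degs a % (degs.getD a 0 + 1) + 1 < degs.getD a 0 + 1 :=
    Nat.succ_lt_succ h
  rw [axisCoord, Nat.add_div_right j hst, ← Nat.mod_add_mod, Nat.mod_eq_of_lt room, axisCoord]

theorem axisSlice_add_stride {degs : List ℕ} {a j : ℕ} (f : ℕ → ℝ)
    (h : axisCoord degs a j < degs.getD a 0) :
    axisSlice degs a f (j + axisStride degs a) = axisSlice degs a f j := by
  funext k
  rw [axisSlice, axisSlice, axisCoord_add_stride h, Nat.mul_succ, Nat.add_sub_add_right]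

theorem add_stride_lt_gridSize {degs : List ℕ} {a j : ℕ} (hj : j < gridSize degs)
    (h : axisCoord degs a j < degs.getD a 0) : j + axisStride degs a < gridSize degs := by
  obtain ⟨q, hq⟩ := axisStride_mul_dvd degs a
  have hst : 0 < axisStride degs a := gridSize_pos _
  set st := axisStride degs a
  set m := degs.getD a 0 + 1
  have row : j / st / m < q := by
    rw [Nat.div_div_eq_div_mul, Nat.div_lt_iff_lt_mul (by positivity), mul_comm q, ← hq]
    exact hj
  have coord : j / st % m + 1 < m := Nat.succ_lt_succ h
  have word : j / st + 1 < m * q := by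
    have := Nat.mul_le_mul_left m (Nat.succ_le_of_lt row)
    have := Nat.div_add_mod (j / st) m
    rw [Nat.mul_succ] at *
    omega
  rw [hq, mul_assoc, mul_comm st, ← Nat.div_lt_iff_lt_mul hst, Nat.add_div_right j hst]
  exact word

theorem stride_le_of_axisCoord_pos {degs : List ℕ} {a j : ℕ} (h : 0 < axisCoord degs a j) :
    axisStride degs a ≤ j :=
  (Nat.le_mul_of_pos_right _ h).trans (axisStride_mul_axisCoord_le degs a j)

theorem axisCoord_sub_stride {degs : List ℕ} {a j : ℕ} (h : 0 < axisCoord degs a j) :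
    axisCoord degs a (j - axisStride degs a) + 1 = axisCoord degs a j := by
  have hst : 0 < axisStride degs a := gridSize_pos _
  obtain ⟨i, rfl⟩ := Nat.exists_eq_add_of_le' (stride_le_of_axisCoord_pos h)
  have not_last : axisCoord degs a i ≠ degs.getD a 0 := fun last => by
    rw [axisCoord] at last
    rw [axisCoord, Nat.add_div_right i hst, ← Nat.mod_add_mod, last, Nat.mod_self] at h
    exact lt_irrefl 0 h
  rw [Nat.add_sub_cancel, axisCoord_add_stride (lt_of_le_of_ne (axisCoord_le degs a i) not_last)]

theorem axisSlice_sub_stride {degs : List ℕ} {a j : ℕ} (f : ℕ → ℝ) (h : 0 < axisCoord degs a j) :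
    axisSlice degs a f (j - axisStride degs a) = axisSlice degs a f j := by
  have coord := axisCoord_sub_stride h
  have := axisCoord_le degs a j
  rw [← axisSlice_add_stride f (j := j - axisStride degs a) (by omega),
    Nat.sub_add_cancel (stride_le_of_axisCoord_pos h)]

end BernsteinGrid

section DeCasteljau

open Finset

/-- Averaging neighbouring coefficients: the step of de Casteljau's algorithm at the midpoint. -/
noncomputable def neighborAverage : Module.End ℝ (ℕ → ℝ) :=
  (1 / 2 : ℝ) • (1 + LinearMap.funLeft ℝ ℝ Nat.succ)

theorem neighborAverage_apply (b : ℕ → ℝ) (k : ℕ) :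
    neighborAverage b k = (b k + b (k + 1)) / 2 := by
  simp [neighborAverage, LinearMap.funLeft_apply]
  ring

theorem sum_bernsteinBasis_smul_pow {A : Type*} [Ring A] [Algebra ℝ A] {X Y : A}
    (h : Commute X Y) (d : ℕ) (x : ℝ) :
    ∑ i ∈ range (d + 1), bernsteinBasis d i x • (Y ^ i * X ^ (d - i)) =
      (x • Y + (1 - x) • X) ^ d := by
  rw [((h.symm.smul_left x).smul_right (1 - x)).add_pow]
  refine sum_congr rfl fun i _ => ?_
  rw [smul_pow, smul_pow, smul_mul_smul_comm, ← nsmul_eq_mul', ← Nat.cast_smul_eq_nsmul ℝ,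
    smul_smul, bernsteinBasis, powerBasis]

theorem funLeft_succ_pow_apply (i : ℕ) (b : ℕ → ℝ) (k : ℕ) :
    (LinearMap.funLeft ℝ ℝ Nat.succ ^ i) b k = b (k + i) := by
  induction i generalizing k with
  | zero => rfl
  | succ i ih =>
    rw [pow_succ', Module.End.mul_apply, LinearMap.funLeft_apply, ih, Nat.succ_add_eq_add_succ]

theorem sum_bernsteinBasis_mul_pow_apply {X Y : Module.End ℝ (ℕ → ℝ)} (h : Commute X Y) (d : ℕ)
    (x : ℝ) (b : ℕ → ℝ) :
    ∑ i ∈ range (d + 1), bernsteinBasis d i x * (Y ^ i) ((X ^ (d - i)) b) 0 =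
      ((x • Y + (1 - x) • X) ^ d) b 0 := by
  simp only [← sum_bernsteinBasis_smul_pow h, LinearMap.sum_apply, Finset.sum_apply,
    LinearMap.smul_apply, Pi.smul_apply, smul_eq_mul, Module.End.mul_apply]

theorem sum_bernsteinBasis_mul_eq (d : ℕ) (x : ℝ) (b : ℕ → ℝ) :
    ∑ i ∈ range (d + 1), bernsteinBasis d i x * b i =
      ((x • LinearMap.funLeft ℝ ℝ Nat.succ + (1 - x) • 1) ^ d : Module.End ℝ (ℕ → ℝ)) b 0 := by
  rw [← sum_bernsteinBasis_mul_pow_apply (Commute.one_left (LinearMap.funLeft ℝ ℝ Nat.succ))]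
  simp only [one_pow, Module.End.one_apply, funLeft_succ_pow_apply, zero_add]

theorem sum_bernsteinBasis_mul_neighborAverage_left (d : ℕ) (x : ℝ) (b : ℕ → ℝ) :
    ∑ i ∈ range (d + 1), bernsteinBasis d i x * (neighborAverage ^ i) b 0 =
      ∑ i ∈ range (d + 1), bernsteinBasis d i (x / 2) * b i := by
  have curve : x • neighborAverage + (1 - x) • (1 : Module.End ℝ (ℕ → ℝ)) =
      (x / 2) • LinearMap.funLeft ℝ ℝ Nat.succ + (1 - x / 2) • 1 := by
    rw [neighborAverage]
    module
  rw [sum_bernsteinBasis_mul_eq d (x / 2), ← curve,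
    ← sum_bernsteinBasis_mul_pow_apply (Commute.one_left neighborAverage)]
  simp only [one_pow, Module.End.one_apply]

theorem sum_bernsteinBasis_mul_neighborAverage_right (d : ℕ) (x : ℝ) (b : ℕ → ℝ) :
    ∑ i ∈ range (d + 1), bernsteinBasis d i x * (neighborAverage ^ (d - i)) b i =
      ∑ i ∈ range (d + 1), bernsteinBasis d i ((1 + x) / 2) * b i := by
  have curve : x • LinearMap.funLeft ℝ ℝ Nat.succ + (1 - x) • neighborAverage =
      ((1 + x) / 2) • LinearMap.funLeft ℝ ℝ Nat.succ +
        (1 - (1 + x) / 2) • (1 : Module.End ℝ (ℕ → ℝ)) := by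
    rw [neighborAverage]
    module
  have comm : Commute neighborAverage (LinearMap.funLeft ℝ ℝ Nat.succ) :=
    ((Commute.one_left _).add_left (Commute.refl _)).smul_left _
  rw [sum_bernsteinBasis_mul_eq d ((1 + x) / 2), ← curve, ← sum_bernsteinBasis_mul_pow_apply comm]
  simp only [funLeft_succ_pow_apply, zero_add]

end DeCasteljau

section PackedTensors

open Finset

/-- The words of `code`, which carry a bias of `2 ^ 62`, are lower bounds for the numbers `b j`. -/
def IsLowerCode (n code : ℕ) (b : ℕ → ℝ) : Prop :=
  ∃ f : ℕ → ℕ, code = pack 64 f n ∧ (∀ j < n, f j < 2 ^ 63) ∧ ∀ j < n, (f j : ℝ) - 2 ^ 62 ≤ b j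

theorem IsLowerCode.congr {n code : ℕ} {b b' : ℕ → ℝ} (h : IsLowerCode n code b)
    (hb : ∀ j < n, b j = b' j) : IsLowerCode n code b' := by
  obtain ⟨f, code_eq, f_lt, f_le⟩ := h
  exact ⟨f, code_eq, f_lt, fun j hj => hb j hj ▸ f_le j hj⟩

theorem IsLowerCode.averageOn {n code y mask : ℕ} {sel : ℕ → Prop} [DecidablePred sel]
    {b : ℕ → ℝ} {nbr : ℕ → ℕ} (h : IsLowerCode n code b) (hmask : IsWordMask n mask sel)
    (hnbr : ∀ j < n, sel j → nbr j < n)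
    (hy : ∀ f : ℕ → ℕ, code = pack 64 f n → (∀ j < n, f j < 2 ^ 64) →
      y &&& mask = pack 64 (fun j => if sel j then f (nbr j) else 0) n) :
    IsLowerCode n (averageOn n mask code y)
      fun j => if sel j then (b j + b (nbr j)) / 2 else b j := by
  obtain ⟨f, code_eq, f_lt, f_le⟩ := h
  have y_eq := hy f code_eq fun j hj => (f_lt j hj).trans (by norm_num)
  have nbr_lt : ∀ j < n, (if sel j then f (nbr j) else 0) < 2 ^ 63 := fun j hj => by
    split_ifs with hs; exacts [f_lt _ (hnbr j hj hs), by norm_num]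
  refine ⟨fun j => if sel j then (f j + f (nbr j)) / 2 else f j, ?_, fun j hj => ?_, fun j hj => ?_⟩
  · rw [code_eq, averageOn_pack f_lt nbr_lt hmask]
    · exact pack_congr fun j _ => by split_ifs <;> rfl
    · rw [y_eq]
      exact pack_congr fun j _ => by split_ifs <;> rfl
  · have := f_lt j hj
    dsimp only
    split_ifs with hs
    · have := f_lt _ (hnbr j hj hs)
      omega
    · exact this
  · have := f_le j hj
    dsimp only
    split_ifs with hs
    · have := f_le _ (hnbr j hj hs)
      have floor : (((f j + f (nbr j)) / 2 : ℕ) : ℝ) ≤ ((f j + f (nbr j) : ℕ) : ℝ) / 2 := by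
        exact_mod_cast Nat.cast_div_le
      push_cast at floor
      linarith
    · exact this

/-- The first `r` rounds of averaging each word with its predecessor along an axis of stride `st`
and length `m`; after `m - 1` rounds the words are the Bernstein coefficients on the lower half. -/
def lowerHalf (st m n code : ℕ) : ℕ → ℕ
  | 0 => code
  | r + 1 => averageOn n (axisMask st m n m ^^^ axisMask st m n (r + 1)) (lowerHalf st m n code r)
      (lowerHalf st m n code r <<< (64 * st))

/-- The first `r` rounds of averaging each word with its successor along an axis of stride `st`
and length `m`; after `m - 1` rounds the words are the Bernstein coefficients on the upper half. -/
def upperHalf (st m n code : ℕ) : ℕ → ℕ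
  | 0 => code
  | r + 1 => averageOn n (axisMask st m n (m - (r + 1))) (upperHalf st m n code r)
      (upperHalf st m n code r >>> (64 * st))

theorem isWordMask_axisMask (degs : List ℕ) (a : ℕ) {r : ℕ} (hr : r ≤ degs.getD a 0 + 1) :
    IsWordMask (gridSize degs)
      (axisMask (axisStride degs a) (degs.getD a 0 + 1) (gridSize degs) r)
      fun j => axisCoord degs a j < r :=
  testBit_axisMask (gridSize_pos _) (Nat.succ_pos _) (axisStride_mul_dvd degs a) hr

theorem isWordMask_axisMask_xor (degs : List ℕ) (a : ℕ) {r : ℕ} (hr : r ≤ degs.getD a 0 + 1) :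
    IsWordMask (gridSize degs)
      (axisMask (axisStride degs a) (degs.getD a 0 + 1) (gridSize degs) (degs.getD a 0 + 1) ^^^
        axisMask (axisStride degs a) (degs.getD a 0 + 1) (gridSize degs) r)
      fun j => r ≤ axisCoord degs a j := by
  intro b
  have := Nat.lt_succ_of_le (axisCoord_le degs a (b / 64))
  rw [Nat.testBit_xor, isWordMask_axisMask degs a le_rfl, isWordMask_axisMask degs a hr]
  simp only [this, decide_true, Bool.and_true, ← not_lt, decide_not]
  cases decide (b / 64 < gridSize degs) <;> simp

theorem isLowerCode_lowerHalf {degs : List ℕ} (a : ℕ) {code : ℕ} {b : ℕ → ℝ}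
    (h : IsLowerCode (gridSize degs) code b) {r : ℕ} (hr : r ≤ degs.getD a 0) :
    IsLowerCode (gridSize degs)
      (lowerHalf (axisStride degs a) (degs.getD a 0 + 1) (gridSize degs) code r) fun j =>
        (neighborAverage ^ min r (axisCoord degs a j)) (axisSlice degs a b j)
          (axisCoord degs a j - min r (axisCoord degs a j)) := by
  induction r with
  | zero =>
    refine h.congr fun j _ => ?_
    simp [axisSlice, Nat.sub_add_cancel (axisStride_mul_axisCoord_le degs a j)]
  | succ r ih =>
    have mask := isWordMask_axisMask_xor degs a (r := r + 1) (by omega)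
    have back (j : ℕ) (hj : r + 1 ≤ axisCoord degs a j) : axisStride degs a ≤ j :=
      stride_le_of_axisCoord_pos (by omega)
    refine ((ih (by omega)).averageOn (nbr := fun j => j - axisStride degs a) mask
      (fun j hj _ => by omega) fun f code_eq hf => ?_).congr fun j _ => ?_
    · rw [code_eq, pack_shiftLeft_land_mask hf mask back]
    · by_cases hc : r + 1 ≤ axisCoord degs a j
      · have pos : 0 < axisCoord degs a j := by omega
        have coord := axisCoord_sub_stride pos
        have prev : axisCoord degs a (j - axisStride degs a) = axisCoord degs a j - 1 := by omega
        rw [if_pos hc, axisSlice_sub_stride b pos, prev, min_eq_left hc, min_eq_left (by omega),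
          min_eq_left (by omega), pow_succ', Module.End.mul_apply, neighborAverage_apply,
          show axisCoord degs a j - (r + 1) + 1 = axisCoord degs a j - r by omega,
          show axisCoord degs a j - 1 - r = axisCoord degs a j - (r + 1) by omega, add_comm]
      · rw [if_neg hc, min_eq_right (by omega), min_eq_right (by omega)]

theorem isLowerCode_upperHalf {degs : List ℕ} (a : ℕ) {code : ℕ} {b : ℕ → ℝ}
    (h : IsLowerCode (gridSize degs) code b) {r : ℕ} (hr : r ≤ degs.getD a 0) :
    IsLowerCode (gridSize degs)
      (upperHalf (axisStride degs a) (degs.getD a 0 + 1) (gridSize degs) code r) fun j =>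
        (neighborAverage ^ min r (degs.getD a 0 - axisCoord degs a j)) (axisSlice degs a b j)
          (axisCoord degs a j) := by
  induction r with
  | zero =>
    refine h.congr fun j _ => ?_
    simp [axisSlice, Nat.sub_add_cancel (axisStride_mul_axisCoord_le degs a j)]
  | succ r ih =>
    have mask := isWordMask_axisMask degs a (r := degs.getD a 0 + 1 - (r + 1)) (by omega)
    have forth (j : ℕ) (hj : j < gridSize degs)
        (hc : axisCoord degs a j < degs.getD a 0 + 1 - (r + 1)) :
        j + axisStride degs a < gridSize degs := add_stride_lt_gridSize hj (by omega)
    refine ((ih (by omega)).averageOn (nbr := fun j => j + axisStride degs a) mask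
      forth fun f code_eq hf => ?_).congr fun j _ => ?_
    · rw [code_eq, pack_shiftRight_land_mask hf mask forth]
    · by_cases hc : axisCoord degs a j < degs.getD a 0 + 1 - (r + 1)
      · have not_last : axisCoord degs a j < degs.getD a 0 := by omega
        rw [if_pos hc, axisSlice_add_stride b not_last, axisCoord_add_stride not_last,
          min_eq_left (by omega), min_eq_left (by omega), min_eq_left (by omega), pow_succ',
          Module.End.mul_apply, neighborAverage_apply]
      · rw [if_neg hc, min_eq_right (by omega), min_eq_right (by omega)]

/-- A tensor of Bernstein coefficients, stored with bias `2 ^ 62` in the 64-bit words of one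
number. -/
structure PackedTensor where
  /-- The degree along each axis. -/
  degs : List ℕ
  /-- The biased coefficients. -/
  code : ℕ

namespace PackedTensor

/-- The polynomial with Bernstein coefficients `T` is at most `F` on the unit cube, even if the
stored coefficients have been rounded down. -/
def LowerBound (T : PackedTensor) (F : (ℕ → ℝ) → ℝ) : Prop :=
  ∃ b, IsLowerCode (gridSize T.degs) T.code b ∧
    ∀ v ∈ unitCube, gridSum bernsteinBasis T.degs b v ≤ F v

/-- The coefficients on the half of the cube where the coordinate `a` is at most `1 / 2`. -/
def lower (a : ℕ) (T : PackedTensor) : PackedTensor :=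
  ⟨T.degs, lowerHalf (axisStride T.degs a) (T.degs.getD a 0 + 1) (gridSize T.degs) T.code
    (T.degs.getD a 0)⟩

/-- The coefficients on the half of the cube where the coordinate `a` is at least `1 / 2`. -/
def upper (a : ℕ) (T : PackedTensor) : PackedTensor :=
  ⟨T.degs, upperHalf (axisStride T.degs a) (T.degs.getD a 0 + 1) (gridSize T.degs) T.code
    (T.degs.getD a 0)⟩

/-- All stored coefficients are nonnegative. -/
def isNonneg (T : PackedTensor) : Bool :=
  let signs := 2 ^ 62 * periodicMask 1 64 (gridSize T.degs)
  T.code &&& signs == signs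

/-- On each of the subboxes obtained by successively halving the axes in the list, some tensor of
the family has nonnegative coefficients; a box is not halved further once it has been settled. -/
def subdivide : List ℕ → List PackedTensor → Bool
  | [], Ts => Ts.any isNonneg
  | a :: as, Ts =>
    Ts.any isNonneg || (subdivide as (Ts.map (lower a)) && subdivide as (Ts.map (upper a)))

theorem subdivide_cons_of_halves {a : ℕ} {as : List ℕ} {Ts : List PackedTensor}
    (hlower : subdivide as (Ts.map (lower a)) = true)
    (hupper : subdivide as (Ts.map (upper a)) = true) : subdivide (a :: as) Ts = true := by
  rw [subdivide, hlower, hupper, Bool.and_self, Bool.or_true]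

theorem LowerBound.lower {T : PackedTensor} {F : (ℕ → ℝ) → ℝ} (h : T.LowerBound F) (a : ℕ) :
    (T.lower a).LowerBound fun v => F (Function.update v a (v a / 2)) := by
  obtain ⟨b, hb, hF⟩ := h
  refine ⟨fun j => (neighborAverage ^ axisCoord T.degs a j) (axisSlice T.degs a b j) 0,
    (isLowerCode_lowerHalf a hb le_rfl).congr fun j _ => ?_, fun v hv => ?_⟩
  · rw [min_eq_right (axisCoord_le T.degs a j), Nat.sub_self]
  · have h0 : 0 ≤ v a := hv.1 a
    have h1 : v a ≤ 1 := hv.2 a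
    refine le_of_eq_of_le ?_ (hF _ (update_mem_unitCube hv a (by linarith) (by linarith)))
    exact gridSum_axisSlice T.degs a (fun i c => (neighborAverage ^ i) c 0)
      (sum_bernsteinBasis_mul_neighborAverage_left _ _) b

theorem LowerBound.upper {T : PackedTensor} {F : (ℕ → ℝ) → ℝ} (h : T.LowerBound F) (a : ℕ) :
    (T.upper a).LowerBound fun v => F (Function.update v a ((1 + v a) / 2)) := by
  obtain ⟨b, hb, hF⟩ := h
  refine ⟨fun j => (neighborAverage ^ (T.degs.getD a 0 - axisCoord T.degs a j))
    (axisSlice T.degs a b j) (axisCoord T.degs a j),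
    (isLowerCode_upperHalf a hb le_rfl).congr fun j _ => ?_, fun v hv => ?_⟩
  · rw [min_eq_right (Nat.sub_le _ _)]
  · have h0 : 0 ≤ v a := hv.1 a
    have h1 : v a ≤ 1 := hv.2 a
    refine le_of_eq_of_le ?_ (hF _ (update_mem_unitCube hv a (by linarith) (by linarith)))
    exact gridSum_axisSlice T.degs a
      (fun i c => (neighborAverage ^ (T.degs.getD a 0 - i)) c i)
      (sum_bernsteinBasis_mul_neighborAverage_right _ _) b

theorem LowerBound.nonneg {T : PackedTensor} {F : (ℕ → ℝ) → ℝ} (h : T.LowerBound F)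
    (hT : T.isNonneg = true) {v : ℕ → ℝ} (hv : v ∈ unitCube) : 0 ≤ F v := by
  obtain ⟨b, ⟨f, code_eq, f_lt, f_le⟩, hF⟩ := h
  have word_nonneg (j : ℕ) (hj : j < gridSize T.degs) : 0 ≤ b j := by
    have bit := congrArg (Nat.testBit · (64 * j + 62)) (beq_iff_eq.1 hT)
    simp only [code_eq, Nat.testBit_land, Nat.testBit_two_pow_mul,
      testBit_periodicMask (b := 1) (p := 64) (by norm_num) (by norm_num),
      testBit_pack (by norm_num) fun i hi => (f_lt i hi).trans (by norm_num : 2 ^ 63 < 2 ^ 64)]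
      at bit
    rw [show (64 * j + 62) / 64 = j by omega, show (64 * j + 62) % 64 = 62 by omega,
      show 64 * j + 62 - 62 = 64 * j by omega] at bit
    have high : (f j).testBit 62 = true := by simpa [hj] using bit
    have : (2 ^ 62 : ℝ) ≤ f j := by exact_mod_cast Nat.ge_two_pow_of_testBit high
    linarith [f_le j hj]
  calc 0 = gridSum bernsteinBasis T.degs (fun _ => 0 * 0) v := by rw [gridSum_const_mul, zero_mul]
    _ ≤ gridSum bernsteinBasis T.degs b v :=
        gridSum_mono bernsteinBasis_nonneg hv fun j hj => (zero_mul _).trans_le (word_nonneg j hj)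
    _ ≤ F v := hF v hv

theorem exists_nonneg_of_any_isNonneg {Ts : List PackedTensor} {Fs : List ((ℕ → ℝ) → ℝ)}
    (h : List.Forall₂ LowerBound Ts Fs) (hTs : Ts.any isNonneg = true) {v : ℕ → ℝ}
    (hv : v ∈ unitCube) : ∃ F ∈ Fs, 0 ≤ F v := by
  induction h with
  | nil => simp at hTs
  | cons hT _ ih =>
    rw [List.any_cons, Bool.or_eq_true] at hTs
    rcases hTs with hT' | hTs
    · exact ⟨_, List.mem_cons_self, hT.nonneg hT' hv⟩
    · obtain ⟨F, hF, hFv⟩ := ih hTs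
      exact ⟨F, List.mem_cons_of_mem _ hF, hFv⟩

theorem exists_nonneg_of_subdivide {as : List ℕ} {Ts : List PackedTensor}
    {Fs : List ((ℕ → ℝ) → ℝ)} (h : List.Forall₂ LowerBound Ts Fs) (hs : subdivide as Ts = true)
    {v : ℕ → ℝ} (hv : v ∈ unitCube) : ∃ F ∈ Fs, 0 ≤ F v := by
  induction as generalizing Ts Fs v with
  | nil => exact exists_nonneg_of_any_isNonneg h hs hv
  | cons a as ih =>
    have h0 : 0 ≤ v a := hv.1 a
    have h1 : v a ≤ 1 := hv.2 a
    rw [subdivide, Bool.or_eq_true, Bool.and_eq_true] at hs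
    rcases hs with settled | ⟨hlower, hupper⟩
    · exact exists_nonneg_of_any_isNonneg h settled hv
    rcases le_total (v a) (1 / 2) with half | half
    · obtain ⟨_, hG, hGv⟩ := ih
        (Fs := Fs.map fun F v => F (Function.update v a (v a / 2)))
        (List.forall₂_map_left_iff.2
          (List.forall₂_map_right_iff.2 (h.imp fun _ _ hT => hT.lower a)))
        hlower (update_mem_unitCube hv a (x := 2 * v a) (by linarith) (by linarith))
      obtain ⟨F, hF, rfl⟩ := List.mem_map.1 hG
      exact ⟨F, hF, by simpa using hGv⟩
    · obtain ⟨_, hG, hGv⟩ := ih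
        (Fs := Fs.map fun F v => F (Function.update v a ((1 + v a) / 2)))
        (List.forall₂_map_left_iff.2
          (List.forall₂_map_right_iff.2 (h.imp fun _ _ hT => hT.upper a)))
        hupper (update_mem_unitCube hv a (x := 2 * v a - 1) (by linarith) (by linarith))
      obtain ⟨F, hF, rfl⟩ := List.mem_map.1 hG
      exact ⟨F, hF, by simpa using hGv⟩

end PackedTensor

end PackedTensors

/-- Syntactic polynomials with integer coefficients. -/
inductive PolyExpr (σ : Type*)
  | const (c : ℤ)
  | var (i : σ)
  | add (e f : PolyExpr σ)
  | mul (e f : PolyExpr σ)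

namespace PolyExpr

variable {σ : Type*}

instance : Add (PolyExpr σ) := ⟨add⟩

instance : Mul (PolyExpr σ) := ⟨mul⟩

instance : IntCast (PolyExpr σ) := ⟨const⟩

/-- Iterated multiplication of expressions, the implementation of `e ^ n`. -/
def power (e : PolyExpr σ) : ℕ → PolyExpr σ
  | 0 => const 1
  | n + 1 => power e n * e

instance : Pow (PolyExpr σ) ℕ := ⟨power⟩

/-- The value of an expression; `c` says how its constants are to be read. -/
def eval {R : Type*} [Add R] [Mul R] (c : ℤ → R) (v : σ → R) : PolyExpr σ → R
  | const a => c a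
  | var i => v i
  | add e f => eval c v e + eval c v f
  | mul e f => eval c v e * eval c v f

theorem isPolyHom_eval {R : Type*} [CommRing R] (v : σ → R) :
    IsPolyHom (eval (Int.cast : ℤ → R) v) where
  map_add _ _ := rfl
  map_mul _ _ := rfl
  map_intCast _ := rfl
  map_pow e n := by
    induction n with
    | zero => exact Int.cast_one.trans (pow_zero _).symm
    | succ n ih => exact (congrArg (· * _) ih).trans (pow_succ _ n).symm

open MvPolynomial Finset

/-- The polynomial denoted by an expression. -/
noncomputable def toMvPolynomial (e : PolyExpr σ) : MvPolynomial σ ℤ := e.eval C X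

/-- The polynomial denoted by an expression after replacing its constants by their absolute values;
its coefficients dominate those of the polynomial itself. -/
noncomputable def majorant (e : PolyExpr σ) : MvPolynomial σ ℕ := e.eval (fun a => C a.natAbs) X

theorem eval₂_toMvPolynomial {R : Type*} [CommRing R] (v : σ → R) (e : PolyExpr σ) :
    e.toMvPolynomial.eval₂ (Int.castRingHom R) v = e.eval Int.cast v := by
  induction e with
  | const c => exact eval₂_C _ _ c
  | var i => exact eval₂_X _ _ i
  | add e f ihe ihf => exact (eval₂_add _ _).trans (congrArg₂ _ ihe ihf)
  | mul e f ihe ihf => exact (eval₂_mul _ _).trans (congrArg₂ _ ihe ihf)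

theorem eval_majorant (v : σ → ℕ) (e : PolyExpr σ) :
    MvPolynomial.eval v e.majorant = e.eval Int.natAbs v := by
  induction e with
  | const c => exact eval_C _
  | var i => exact eval_X i
  | add e f ihe ihf => exact (eval_add ..).trans (congrArg₂ _ ihe ihf)
  | mul e f ihe ihf => exact (eval_mul ..).trans (congrArg₂ _ ihe ihf)

theorem natAbs_coeff_le_coeff_majorant (e : PolyExpr σ) (α : σ →₀ ℕ) :
    (e.toMvPolynomial.coeff α).natAbs ≤ e.majorant.coeff α := by
  classical
  induction e generalizing α with
  | const c =>
    simp only [toMvPolynomial, majorant, eval, coeff_C]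
    split_ifs <;> simp
  | var i =>
    simp only [toMvPolynomial, majorant, eval, coeff_X]
    split_ifs <;> simp
  | add e f ihe ihf =>
    change (coeff α (e.toMvPolynomial + f.toMvPolynomial)).natAbs ≤
      coeff α (e.majorant + f.majorant)
    rw [coeff_add, coeff_add]
    exact (Int.natAbs_add_le _ _).trans (add_le_add (ihe α) (ihf α))
  | mul e f ihe ihf =>
    change (coeff α (e.toMvPolynomial * f.toMvPolynomial)).natAbs ≤
      coeff α (e.majorant * f.majorant)
    rw [coeff_mul, coeff_mul]
    refine (Int.natAbs_sum_le _ _).trans (sum_le_sum fun x _ => ?_)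
    rw [Int.natAbs_mul]
    exact Nat.mul_le_mul (ihe x.1) (ihf x.2)

theorem support_toMvPolynomial_subset (e : PolyExpr σ) :
    e.toMvPolynomial.support ⊆ e.majorant.support := fun α hα => by
  have := e.natAbs_coeff_le_coeff_majorant α
  rw [mem_support_iff] at *
  omega

end PolyExpr

/-! ### Kronecker substitution -/

section WeightedHomogeneity

open MvPolynomial Finset

variable {σ : Type*}

theorem eval_pow_eq_sum_mul_pow_weight (p : MvPolynomial σ ℕ) (u : σ → ℕ) (B : ℕ) :
    eval (fun s => B ^ u s) p = ∑ α ∈ p.support, p.coeff α * B ^ Finsupp.weight u α := by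
  rw [eval_eq]
  refine sum_congr rfl fun α _ => ?_
  simp only [Finsupp.weight_apply, Finsupp.sum, smul_eq_mul, ← pow_mul, prod_pow_eq_pow_sum,
    mul_comm (u _)]

-- A base exceeding the coefficient sum keeps the contributions of different weights apart.
theorem isWeightedHomogeneous_of_eval_pow_eq {p : MvPolynomial σ ℕ} {u : σ → ℕ} {B D : ℕ}
    (hB : eval (fun _ => 1) p < B) (h : eval (fun s => B ^ u s) p = B ^ D * eval (fun _ => 1) p) :
    IsWeightedHomogeneous u p D := by
  have total : eval (fun _ => 1) p = ∑ α ∈ p.support, p.coeff α := by simp [eval_eq]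
  have B_pos : 0 < B := by omega
  rw [eval_pow_eq_sum_mul_pow_weight] at h
  have weight_le : ∀ α ∈ p.support, Finsupp.weight u α ≤ D := by
    intro α hα
    by_contra! hlt
    have one_le : 1 ≤ p.coeff α := Nat.one_le_iff_ne_zero.2 (mem_support_iff.1 hα)
    have := calc
      B ^ D * B = B ^ (D + 1) := (pow_succ B D).symm
      _ ≤ B ^ Finsupp.weight u α := Nat.pow_le_pow_right B_pos hlt
      _ ≤ p.coeff α * B ^ Finsupp.weight u α := Nat.le_mul_of_pos_left _ one_le
      _ ≤ _ := single_le_sum (f := fun α => p.coeff α * B ^ Finsupp.weight u α)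
        (fun _ _ => Nat.zero_le _) hα
      _ = B ^ D * eval (fun _ => 1) p := h
    exact absurd (Nat.le_of_mul_le_mul_left this (by positivity)) (by omega)
  intro α hα
  have hα' := mem_support_iff.2 hα
  have terms_eq := (sum_eq_sum_iff_of_le (s := p.support)
    (f := fun α => p.coeff α * B ^ Finsupp.weight u α) (g := fun α => p.coeff α * B ^ D)
    fun α hα => Nat.mul_le_mul_left _ (Nat.pow_le_pow_right B_pos (weight_le α hα))).1
      (by rw [h, total, ← sum_mul, mul_comm]) α hα'
  have one_lt : 1 < B := by
    have := single_le_sum (f := fun α => p.coeff α) (fun _ _ => Nat.zero_le _) hα'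
    have := Nat.one_le_iff_ne_zero.2 hα
    omega
  exact Nat.pow_right_injective one_lt (Nat.eq_of_mul_eq_mul_left (Nat.pos_of_ne_zero hα) terms_eq)

end WeightedHomogeneity

section Kronecker

open Finset

/-- The number in the lexicographic order of the tensor entry with the indices `e i`. -/
def flatIndex : List ℕ → (ℕ → ℕ) → ℕ
  | [], _ => 0
  | _ :: ds, e => e 0 * gridSize ds + flatIndex ds fun k => e (k + 1)

theorem flatIndex_lt {degs : List ℕ} {e : ℕ → ℕ} (he : ∀ i, e i ≤ degs.getD i 0) :
    flatIndex degs e < gridSize degs := by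
  induction degs generalizing e with
  | nil => exact one_pos
  | cons d ds ih =>
    exact block_index_lt (mem_range.2 (Nat.lt_succ_of_le (he 0))) (ih fun i => he (i + 1))

theorem flatIndex_eq_sum (degs : List ℕ) (e : ℕ → ℕ) :
    flatIndex degs e = ∑ i ∈ range degs.length, axisStride degs i * e i := by
  induction degs generalizing e with
  | nil => rfl
  | cons d ds ih =>
    rw [flatIndex, ih, List.length_cons, sum_range_succ', add_comm, mul_comm (e 0)]
    rfl

theorem gridSum_single_flatIndex (B : ℕ → ℕ → ℝ → ℝ) {degs : List ℕ} {e : ℕ → ℕ}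
    (he : ∀ i, e i ≤ degs.getD i 0) (v : ℕ → ℝ) :
    gridSum B degs (fun j => if j = flatIndex degs e then 1 else 0) v =
      ∏ i ∈ range degs.length, B (degs.getD i 0) (e i) (v i) := by
  induction degs generalizing e v with
  | nil => rfl
  | cons d ds ih =>
    have tail_le (i : ℕ) : e (i + 1) ≤ ds.getD i 0 := he (i + 1)
    have row (i : ℕ) : gridSum B ds
        (fun j => if i * gridSize ds + j = flatIndex (d :: ds) e then 1 else 0)
        (fun k => v (k + 1)) = (if i = e 0 then 1 else 0) *
          ∏ k ∈ range ds.length, B (ds.getD k 0) (e (k + 1)) (v (k + 1)) := by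
      rw [← ih tail_le, ← gridSum_const_mul]
      refine gridSum_congr _ _ fun j hj => ?_
      simp only [flatIndex, block_index_eq_iff hj (flatIndex_lt tail_le), ite_and, ite_mul, one_mul,
        zero_mul]
    have mem : e 0 ∈ range (d + 1) := mem_range.2 (Nat.lt_succ_of_le (he 0))
    simp only [gridSum, row, ite_mul, one_mul, zero_mul, mul_ite, mul_zero]
    rw [sum_ite_eq', if_pos mem, List.length_cons, prod_range_succ', mul_comm]
    rfl

/-- The two homogeneous coordinates `x`, `1 - x` of each variable `x` of a polynomial expression on
the unit cube are the variables `inl i` and `inr i`. -/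
def cubePoint (v : ℕ → ℝ) : ℕ ⊕ ℕ → ℝ := Sum.elim v fun i => 1 - v i

/-- The substitution which separates the monomials of multidegree `degs` of a polynomial by powers
of `2 ^ w`. -/
def kroneckerPoint (w : ℕ) (degs : List ℕ) : ℕ ⊕ ℕ → ℤ :=
  Sum.elim (fun i => 2 ^ (w * axisStride degs i)) fun _ => 1

/-- The monomial with exponents `α` has total degree `degs i` in the pair of variables number
`i`. -/
def HasMultidegree (degs : List ℕ) (α : ℕ ⊕ ℕ →₀ ℕ) : Prop :=
  ∀ i, α (.inl i) + α (.inr i) = degs.getD i 0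

namespace HasMultidegree

variable {degs : List ℕ} {α : ℕ ⊕ ℕ →₀ ℕ}

theorem inl_le (h : HasMultidegree degs α) (i : ℕ) : α (.inl i) ≤ degs.getD i 0 :=
  (Nat.le_add_right _ _).trans_eq (h i)

theorem support_subset (h : HasMultidegree degs α) :
    α.support ⊆ (range degs.length).disjSum (range degs.length) := by
  intro s hs
  by_contra hs'
  have : degs.getD (Sum.elim id id s) 0 = 0 :=
    List.getD_eq_default _ _ (by rcases s with i | i <;> simpa using hs')
  have hsum := h (Sum.elim id id s)
  rw [Finsupp.mem_support_iff] at hs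
  rcases s with i | i <;> simp only [Sum.elim_inl, Sum.elim_inr, id] at * <;> omega

theorem prod_pow (h : HasMultidegree degs α) {R : Type*} [CommMonoid R] (x : ℕ ⊕ ℕ → R) :
    ∏ s ∈ α.support, x s ^ α s =
      ∏ i ∈ range degs.length, x (.inl i) ^ α (.inl i) * x (.inr i) ^ α (.inr i) := by
  rw [prod_subset h.support_subset fun s _ hs => by
    rw [Finsupp.notMem_support_iff.1 hs, pow_zero], prod_disjSum, prod_mul_distrib]

theorem prod_cubePoint (h : HasMultidegree degs α) (v : ℕ → ℝ) :
    ∏ s ∈ α.support, cubePoint v s ^ α s = gridSum powerBasis degs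
      (fun j => if j = flatIndex degs (fun i => α (.inl i)) then 1 else 0) v := by
  rw [h.prod_pow, gridSum_single_flatIndex _ h.inl_le]
  refine prod_congr rfl fun i _ => ?_
  rw [powerBasis, ← h i, Nat.add_sub_cancel_left]
  rfl

theorem prod_kroneckerPoint (h : HasMultidegree degs α) (w : ℕ) :
    ∏ s ∈ α.support, kroneckerPoint w degs s ^ α s =
      2 ^ (w * flatIndex degs fun i => α (.inl i)) := by
  simp only [h.prod_pow, kroneckerPoint, Sum.elim_inl, Sum.elim_inr, one_pow, mul_one, ← pow_mul,
    prod_pow_eq_pow_sum, flatIndex_eq_sum, mul_sum, mul_assoc]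

end HasMultidegree

namespace PolyExpr

/-- The coefficient number `j` of an expression whose monomials have multidegree `degs`. -/
noncomputable def gridCoeff (e : PolyExpr (ℕ ⊕ ℕ)) (degs : List ℕ) (j : ℕ) : ℤ :=
  ∑ α ∈ e.toMvPolynomial.support,
    e.toMvPolynomial.coeff α * if j = flatIndex degs (fun i => α (.inl i)) then 1 else 0

theorem natAbs_gridCoeff_le (e : PolyExpr (ℕ ⊕ ℕ)) (degs : List ℕ) (j : ℕ) :
    (e.gridCoeff degs j).natAbs ≤ e.eval Int.natAbs fun _ => 1 := by
  calc (e.gridCoeff degs j).natAbs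
      ≤ ∑ α ∈ e.toMvPolynomial.support, e.majorant.coeff α := by
        refine (Int.natAbs_sum_le _ _).trans (sum_le_sum fun α _ => ?_)
        refine le_trans ?_ (e.natAbs_coeff_le_coeff_majorant α)
        split_ifs <;> simp
    _ ≤ ∑ α ∈ e.majorant.support, e.majorant.coeff α :=
        sum_le_sum_of_subset e.support_toMvPolynomial_subset
    _ = e.eval Int.natAbs fun _ => 1 := by rw [← eval_majorant, MvPolynomial.eval_eq]; simp

theorem eval_cubePoint {e : PolyExpr (ℕ ⊕ ℕ)} {degs : List ℕ}
    (h : ∀ α ∈ e.toMvPolynomial.support, HasMultidegree degs α) (v : ℕ → ℝ) :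
    e.eval Int.cast (cubePoint v) = gridSum powerBasis degs (fun j => e.gridCoeff degs j) v := by
  rw [← eval₂_toMvPolynomial, MvPolynomial.eval₂_eq]
  simp only [gridCoeff, Int.cast_sum, Int.cast_mul, Int.cast_ite, Int.cast_one, Int.cast_zero]
  rw [gridSum_sum_mul]
  exact sum_congr rfl fun α hα => congrArg _ ((h α hα).prod_cubePoint v)

theorem eval_kroneckerPoint {e : PolyExpr (ℕ ⊕ ℕ)} {degs : List ℕ}
    (h : ∀ α ∈ e.toMvPolynomial.support, HasMultidegree degs α) (w : ℕ) :
    e.eval id (kroneckerPoint w degs) =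
      ∑ j ∈ range (gridSize degs), e.gridCoeff degs j * 2 ^ (w * j) := by
  have eval_id : e.eval id (kroneckerPoint w degs) = e.eval Int.cast (kroneckerPoint w degs) := rfl
  rw [eval_id, ← eval₂_toMvPolynomial, MvPolynomial.eval₂_eq]
  simp only [gridCoeff, sum_mul]
  rw [sum_comm]
  refine sum_congr rfl fun α hα => ?_
  rw [(h α hα).prod_kroneckerPoint]
  simp only [mul_ite, mul_one, mul_zero, ite_mul, zero_mul]
  rw [sum_ite_eq', if_pos (mem_range.2 (flatIndex_lt (h α hα).inl_le))]
  rfl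

end PolyExpr

end Kronecker

section Encoding

open Finset

/-- The product of the binomial coefficients that turns the entry number `j` of a tensor from the
Bernstein basis to the monomial basis. -/
def gridChoose : List ℕ → ℕ → ℕ
  | [], _ => 1
  | d :: ds, j => d.choose (j / gridSize ds) * gridChoose ds (j % gridSize ds)

theorem gridChoose_pos {degs : List ℕ} {j : ℕ} (hj : j < gridSize degs) :
    0 < gridChoose degs j := by
  induction degs generalizing j with
  | nil => exact one_pos
  | cons d ds ih =>
    have row : j / gridSize ds < d + 1 := Nat.div_lt_of_lt_mul (mul_comm (d + 1) _ ▸ hj)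
    exact Nat.mul_pos (Nat.choose_pos (Nat.lt_succ_iff.1 row))
      (ih (Nat.mod_lt _ (gridSize_pos ds)))

theorem gridSum_bernsteinBasis (degs : List ℕ) (f v : ℕ → ℝ) :
    gridSum bernsteinBasis degs f v =
      gridSum powerBasis degs (fun j => gridChoose degs j * f j) v := by
  induction degs generalizing f v with
  | nil => simp [gridSum, gridChoose]
  | cons d ds ih =>
    refine sum_congr rfl fun i _ => ?_
    rw [ih, bernsteinBasis, mul_comm (d.choose i : ℝ), mul_assoc, ← gridSum_const_mul]
    refine congrArg _ (gridSum_congr _ _ fun j hj => ?_)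
    simp only [gridChoose, block_index_div hj, block_index_mod hj, Nat.cast_mul, mul_assoc]

/-- The quotient by `s` of the number stored as `N` with bias `2 ^ bits`, rounded down and stored
with bias `2 ^ 62`. The value `2 ^ 63` signals an overflow. -/
def encodeCoeff (bits s N : ℕ) : ℕ :=
  let b : ℤ := 2 ^ 62 + ((N : ℤ) - 2 ^ bits) / s
  if 0 ≤ b ∧ b < 2 ^ 63 then b.toNat else 2 ^ 63

theorem encodeCoeff_lt (bits s N : ℕ) : encodeCoeff bits s N < 2 ^ 64 := by
  rw [encodeCoeff]
  split_ifs <;> omega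

theorem encodeCoeff_sub_le {bits s N : ℕ} (h : encodeCoeff bits s N < 2 ^ 63) :
    (encodeCoeff bits s N : ℝ) - 2 ^ 62 ≤ ((N : ℝ) - 2 ^ bits) / s := by
  rw [encodeCoeff] at *
  split_ifs at * with hb
  · have cast : ((2 ^ 62 + ((N : ℤ) - 2 ^ bits) / s).toNat : ℝ) =
        2 ^ 62 + (((N : ℤ) - 2 ^ bits) / s : ℤ) := by
      exact_mod_cast congrArg (Int.cast (R := ℝ)) (Int.toNat_of_nonneg hb.1)
    have floor : ((((N : ℤ) - 2 ^ bits) / s : ℤ) : ℝ) ≤ ((N : ℝ) - 2 ^ bits) / s := by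
      rcases s.eq_zero_or_pos with rfl | hs
      · simp
      · rw [le_div_iff₀ (by exact_mod_cast hs)]
        exact_mod_cast Int.ediv_mul_le _ (by exact_mod_cast hs.ne')
    linarith
  · exact absurd h (lt_irrefl _)

/-- Converts the tensor stored in `N` with `bits + 1` bits per entry, whose entries are the
coefficients in the monomial basis, to its Bernstein coefficients divided by `s`, stored in
64-bit words. -/
def encodeTensor (bits : ℕ) : List ℕ → ℕ → ℕ → ℕ
  | [], s, N => encodeCoeff bits s N
  | d :: ds, s, N => pack (64 * gridSize ds) (fun i => encodeTensor bits ds (s * d.choose i)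
      (N / 2 ^ ((bits + 1) * gridSize ds * i) % 2 ^ ((bits + 1) * gridSize ds))) (d + 1)

theorem encodeTensor_pack {bits : ℕ} {degs : List ℕ} {g : ℕ → ℕ}
    (hg : ∀ j < gridSize degs, g j < 2 ^ (bits + 1)) (s : ℕ) :
    encodeTensor bits degs s (pack (bits + 1) g (gridSize degs)) =
      pack 64 (fun j => encodeCoeff bits (s * gridChoose degs j) (g j)) (gridSize degs) := by
  induction degs generalizing g s with
  | nil => simp [encodeTensor, gridSize, gridChoose, pack]
  | cons d ds ih =>
    have row_lt (i : ℕ) (hi : i < d + 1) : ∀ j < gridSize ds,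
        g (i * gridSize ds + j) < 2 ^ (bits + 1) :=
      fun j hj => hg _ (block_index_lt (mem_range.2 hi) hj)
    rw [encodeTensor, gridSize, pack_mul, pack_mul]
    refine pack_congr fun i hi => ?_
    rw [pack_div_mod (fun i hi => pack_lt (row_lt i hi)) hi, ih (row_lt i hi)]
    refine pack_congr fun j hj => ?_
    simp only [gridChoose, block_index_div hj, block_index_mod hj, mul_assoc]

end Encoding

section BoxPolys

open Finset

/-- A polynomial on the unit cube: an expression in homogeneous coordinates, together with the
parameters by which its Bernstein coefficients are computed. -/
structure BoxPoly where
  /-- The degree in each pair of homogeneous coordinates. -/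
  degs : List ℕ
  /-- The coefficients have absolute values below `2 ^ bits`. -/
  bits : ℕ
  /-- The Bernstein coefficients are stored after division by `2 ^ shift`. -/
  shift : ℕ
  /-- The polynomial. -/
  expr : PolyExpr (ℕ ⊕ ℕ)

namespace BoxPoly

/-- All coefficients of the polynomial, obtained from a single integer evaluation. -/
def kronecker (P : BoxPoly) : ℕ :=
  (P.expr.eval id (kroneckerPoint (P.bits + 1) P.degs) +
    2 ^ P.bits * periodicMask 1 (P.bits + 1) (gridSize P.degs)).toNat

/-- The stored Bernstein coefficients. -/
def toTensor (P : BoxPoly) : PackedTensor :=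
  ⟨P.degs, encodeTensor P.bits P.degs (2 ^ P.shift) P.kronecker⟩

/-- A bound for the sum of the absolute values of the coefficients. -/
def coeffBound (P : BoxPoly) : ℕ := P.expr.eval Int.natAbs fun _ => 1

/-- Tests that all monomials have degree `D` in the pairs of variables selected by `p`. -/
def isHomogeneousIn (P : BoxPoly) (p : ℕ → Bool) (D : ℕ) : Bool :=
  P.expr.eval Int.natAbs (fun s => if p (Sum.elim id id s) then 2 ^ P.bits else 1) ==
    (2 ^ P.bits) ^ D * P.coeffBound

/-- Tests that the parameters are appropriate for the expression and that no Bernstein coefficient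
overflows its word. -/
def valid (P : BoxPoly) : Bool :=
  decide (P.coeffBound < 2 ^ P.bits) &&
    (List.range P.degs.length).all (fun i => P.isHomogeneousIn (· == i) (P.degs.getD i 0)) &&
    P.isHomogeneousIn (P.degs.length ≤ ·) 0 &&
    P.toTensor.code &&& periodicMask 63 64 (gridSize P.degs) == P.toTensor.code

variable {P : BoxPoly}

theorem weight_eq_of_isHomogeneousIn {p : ℕ → Bool} {D : ℕ} (hB : P.coeffBound < 2 ^ P.bits)
    (h : P.isHomogeneousIn p D = true) {α : ℕ ⊕ ℕ →₀ ℕ}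
    (hα : α ∈ P.expr.toMvPolynomial.support) :
    Finsupp.weight (fun s => if p (Sum.elim id id s) then 1 else 0) α = D := by
  refine isWeightedHomogeneous_of_eval_pow_eq (p := P.expr.majorant) (B := 2 ^ P.bits) ?_ ?_
    (MvPolynomial.mem_support_iff.1 (P.expr.support_toMvPolynomial_subset hα))
  · rwa [PolyExpr.eval_majorant]
  · rw [PolyExpr.eval_majorant, PolyExpr.eval_majorant]
    refine Eq.trans ?_ (beq_iff_eq.1 h)
    congr 2 with s
    split_ifs <;> simp

theorem weight_indicator_pair (α : ℕ ⊕ ℕ →₀ ℕ) (i : ℕ) :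
    Finsupp.weight (fun s => if Sum.elim id id s == i then 1 else 0) α =
      α (.inl i) + α (.inr i) := by
  have pair : ({.inl i, .inr i} : Finset (ℕ ⊕ ℕ)).sum α = α (.inl i) + α (.inr i) :=
    sum_pair Sum.inl_ne_inr
  rw [Finsupp.weight_apply, Finsupp.sum, ← pair]
  simp only [beq_iff_eq, smul_eq_mul, mul_ite, mul_one, mul_zero, ← sum_filter]
  refine sum_subset (fun s hs => ?_) fun s hs hs' => ?_
  · rcases s with j | j <;> simp_all
  · rcases s with j | j <;> simp_all

theorem hasMultidegree_of_valid (h : P.valid = true) {α : ℕ ⊕ ℕ →₀ ℕ}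
    (hα : α ∈ P.expr.toMvPolynomial.support) : HasMultidegree P.degs α := by
  simp only [valid, Bool.and_eq_true, decide_eq_true_eq, List.all_eq_true, List.mem_range] at h
  obtain ⟨⟨⟨hB, hdegs⟩, hrest⟩, -⟩ := h
  intro i
  by_cases hi : i < P.degs.length
  · rw [← weight_indicator_pair]
    exact weight_eq_of_isHomogeneousIn hB (hdegs i hi) hα
  · have weight_eq := weight_eq_of_isHomogeneousIn hB hrest hα
    have exponent_le (s : ℕ ⊕ ℕ) (hs : Sum.elim id id s = i) : α s ≤ 0 :=
      weight_eq ▸ Finsupp.le_weight _ (by simpa [hs] using hi) α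
    rw [List.getD_eq_default _ _ (not_lt.1 hi), Nat.le_zero.1 (exponent_le (.inl i) rfl),
      Nat.le_zero.1 (exponent_le (.inr i) rfl)]

theorem coeffBound_lt_of_valid (h : P.valid = true) : P.coeffBound < 2 ^ P.bits := by
  simp only [valid, Bool.and_eq_true, decide_eq_true_eq] at h
  exact h.1.1.1

theorem abs_gridCoeff_lt (hB : P.coeffBound < 2 ^ P.bits) (j : ℕ) :
    |P.expr.gridCoeff P.degs j| < 2 ^ P.bits := by
  rw [Int.abs_eq_natAbs]
  exact_mod_cast (P.expr.natAbs_gridCoeff_le P.degs j).trans_lt hB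

/-- The coefficient number `j` with its bias. -/
noncomputable def biasedCoeff (P : BoxPoly) (j : ℕ) : ℕ :=
  (P.expr.gridCoeff P.degs j + 2 ^ P.bits).toNat

theorem biasedCoeff_cast (hB : P.coeffBound < 2 ^ P.bits) (j : ℕ) :
    (P.biasedCoeff j : ℤ) = P.expr.gridCoeff P.degs j + 2 ^ P.bits := by
  exact Int.toNat_of_nonneg (by linarith [(abs_lt.1 (abs_gridCoeff_lt hB j)).1])

theorem biasedCoeff_lt (hB : P.coeffBound < 2 ^ P.bits) (j : ℕ) :
    P.biasedCoeff j < 2 ^ (P.bits + 1) := by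
  have : (P.biasedCoeff j : ℤ) < 2 ^ (P.bits + 1) := by
    rw [biasedCoeff_cast hB, pow_succ]
    linarith [(abs_lt.1 (abs_gridCoeff_lt hB j)).2]
  exact_mod_cast this

theorem kronecker_eq_pack (h : P.valid = true) :
    P.kronecker = pack (P.bits + 1) P.biasedCoeff (gridSize P.degs) := by
  have bias : 2 ^ P.bits * periodicMask 1 (P.bits + 1) (gridSize P.degs) =
      pack (P.bits + 1) (fun _ => 2 ^ P.bits) (gridSize P.degs) := by
    rw [pack_const P.bits.succ_pos, periodicMask, pow_one, Nat.add_one_sub_one, one_mul]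
  have : P.expr.eval id (kroneckerPoint (P.bits + 1) P.degs) +
      ((2 ^ P.bits * periodicMask 1 (P.bits + 1) (gridSize P.degs) : ℕ) : ℤ) =
        (pack (P.bits + 1) P.biasedCoeff (gridSize P.degs) : ℕ) := by
    rw [bias, PolyExpr.eval_kroneckerPoint fun α hα => hasMultidegree_of_valid h hα, pack_eq_sum,
      pack_eq_sum, Nat.cast_sum, Nat.cast_sum, ← sum_add_distrib]
    refine sum_congr rfl fun j _ => ?_
    push_cast [biasedCoeff_cast (coeffBound_lt_of_valid h)]
    ring
  rw [kronecker, ← Int.toNat_natCast (pack _ _ _), ← this]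
  push_cast
  rfl

theorem toTensor_lowerBound (h : P.valid = true) :
    P.toTensor.LowerBound fun v => (2 ^ P.shift)⁻¹ * P.expr.eval Int.cast (cubePoint v) := by
  have hB := coeffBound_lt_of_valid h
  have code_eq : P.toTensor.code = pack 64
      (fun j => encodeCoeff P.bits (2 ^ P.shift * gridChoose P.degs j) (P.biasedCoeff j))
      (gridSize P.degs) := by
    rw [toTensor, kronecker_eq_pack h, encodeTensor_pack fun j _ => biasedCoeff_lt hB j]
  have words : P.toTensor.code &&& periodicMask 63 64 (gridSize P.degs) = P.toTensor.code := by
    rw [valid, Bool.and_eq_true, beq_iff_eq] at h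
    exact h.2
  rw [code_eq] at words
  have word_lt := lt_of_pack_land_periodicMask_eq (fun _ _ => encodeCoeff_lt ..) words
  refine ⟨fun j => P.expr.gridCoeff P.degs j / (2 ^ P.shift * gridChoose P.degs j),
    ⟨_, code_eq, word_lt, fun j hj => ?_⟩, fun v _ => le_of_eq ?_⟩
  · refine (encodeCoeff_sub_le (word_lt j hj)).trans_eq ?_
    have unbias : (P.biasedCoeff j : ℝ) = P.expr.gridCoeff P.degs j + 2 ^ P.bits := by
      exact_mod_cast congrArg (Int.cast (R := ℝ)) (biasedCoeff_cast hB j)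
    rw [unbias]
    push_cast
    ring
  · change gridSum bernsteinBasis P.degs _ v = _ * P.expr.eval Int.cast (cubePoint v)
    rw [PolyExpr.eval_cubePoint (fun α hα => hasMultidegree_of_valid h hα) v,
      gridSum_bernsteinBasis, ← gridSum_const_mul]
    refine gridSum_congr _ _ fun j hj => ?_
    have : (gridChoose P.degs j : ℝ) ≠ 0 := by exact_mod_cast (gridChoose_pos hj).ne'
    field_simp

theorem exists_nonneg_of_subdivide {axes : List ℕ} {Ps : List BoxPoly}
    (hPs : ∀ P ∈ Ps, P.valid = true)
    (hs : PackedTensor.subdivide axes (Ps.map toTensor) = true) {v : ℕ → ℝ} (hv : v ∈ unitCube) :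
    ∃ P ∈ Ps, 0 ≤ P.expr.eval Int.cast (cubePoint v) := by
  have bounds : List.Forall₂ PackedTensor.LowerBound (Ps.map toTensor)
      (Ps.map fun P v => (2 ^ P.shift)⁻¹ * P.expr.eval Int.cast (cubePoint v)) :=
    List.forall₂_map_left_iff.2 (List.forall₂_map_right_iff.2
      (List.forall₂_same.2 fun P hP => toTensor_lowerBound (hPs P hP)))
  obtain ⟨F, hF, hFv⟩ := PackedTensor.exists_nonneg_of_subdivide bounds hs hv
  obtain ⟨P, hP, rfl⟩ := List.mem_map.1 hF
  exact ⟨P, hP, nonneg_of_mul_nonneg_right hFv (by positivity)⟩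

end BoxPoly

end BoxPolys

/-! ### The forms of the kissing problem -/

section Forms

variable {R S : Type*} [Add R] [Mul R] [IntCast R] [Pow R ℕ] [Add S] [Mul S] [IntCast S] [Pow S ℕ]

/-- The binary form `∑ᵢ aᵢ p₁ⁱ p₂ⁿ⁻ⁱ` with the given coefficients. -/
def binaryForm (p : R × R) : ℕ → List ℤ → R
  | _, [] => ((0 : ℤ) : R)
  | n, a :: l => (a : R) * p.2 ^ n + p.1 * binaryForm p (n - 1) l

/-- The positive semidefinite kernel `∑ g(p) g(q)` over the binary forms `g` in the list. -/
def gramForm (p q : R × R) (n : ℕ) : List (List ℤ) → R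
  | [] => ((0 : ℤ) : R)
  | g :: l => binaryForm p n g * binaryForm q n g + gramForm p q n l

/-- The sum over the blocks `(e, gs)`, numbered from `k`, of the Gegenbauer polynomials of degree
`k` with the factor `2 ^ e` times the kernel of the list `gs`; all summands are made homogeneous of
the same degree by powers of `h`. -/
def zonalSum (a d : ℕ) (p q : R × R) (h t r : R) : List (ℕ × List (List ℤ)) → ℕ → R
  | [], _ => ((0 : ℤ) : R)
  | b :: l, k => ((2 ^ b.1 : ℤ) : R) * (h ^ (d - k) * gegenbauer a t r k) *
      gramForm p q (d - k) b.2 + zonalSum a d p q h t r l (k + 1)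

/-- The sum of the multiples of the Gegenbauer polynomials by the coefficients in the list, which
are numbered from `k`, made homogeneous by powers of `h`. -/
def gegenbauerSum (a d : ℕ) (h u r : R) : List ℤ → ℕ → R
  | [], _ => ((0 : ℤ) : R)
  | c :: l, k => (c : R) * (h ^ (d - k) * gegenbauer a u r k) + gegenbauerSum a d h u r l (k + 1)

/-- The form that is `1` on the affine chart `chart`. -/
def height (p : R × R) : R := p.1 + p.2

/-- Twice the cosine that has homogeneous coordinate `p`: the interval `[-1, 1/2]` of cosines is
parametrised by the coordinates `(x, 1 - x)` with `x ∈ [0, 1]`. -/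
def twoCos (p : R × R) : R := p.1 + ((-2 : ℤ) : R) * p.2

/-- The form `4 height² - twoCos²`. -/
def fourSinSq (p : R × R) : R := ((3 : ℤ) : R) * (p.1 * (((4 : ℤ) : R) * p.2 + p.1))

/-- The kernel of the three-point bound for `y` and `y'` relative to `z`; the homogeneous
coordinates `p`, `q`, `s` stand for the inner products of `y, z`, of `y', z` and of `y, y'`. -/
def zonalTriple (a d : ℕ) (D : List (ℕ × List (List ℤ))) (p q s : R × R) : R :=
  zonalSum a d p q (height s)
    (((2 : ℤ) : R) * (twoCos s * (height p * height q)) +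
      ((-1 : ℤ) : R) * (twoCos p * twoCos q * height s))
    (fourSinSq p * fourSinSq q * height s ^ 2) D 0

/-- Minus the sum of the kernel over the choices of the distinguished point of a triple. -/
def tripleForm (a d : ℕ) (D : List (ℕ × List (List ℤ))) (p q s : R × R) : R :=
  ((-1 : ℤ) : R) * (zonalTriple a d D p q s + (zonalTriple a d D p s q + zonalTriple a d D q s p))

/-- The slack in the inequality that the three-point bound requires for pairs of points. -/
def pairForm (a d : ℕ) (D : List (ℕ × List (List ℤ))) (A g : List ℤ) (w M : ℤ) (p : R × R) : R :=
  ((-1 : ℤ) : R) * (zonalSum a d p p ((1 : ℤ) : R) (fourSinSq p) (fourSinSq p ^ 2) D 0 +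
    ((w : R) * binaryForm p d g * height p ^ d +
      (gegenbauerSum (a + 1) (2 * d) (height p) (twoCos p) (((4 : ℤ) : R) * height p ^ 2) A 0 +
        (M : R) * height p ^ (2 * d))))

/-- A form that is negative if the cosine of `p` is at most that of `q`; the factor `height s` makes
it a form on triples. -/
def orderForm (p q s : R × R) : R :=
  (((2 ^ 40 : ℤ) : R) * (p.1 * height q + ((-1 : ℤ) : R) * (q.1 * height p)) +
    ((-1 : ℤ) : R) * (height p * height q)) * height s

/-- A form that is negative if the matrix with unit diagonal and the cosines of `p`, `q`, `s` as its
other entries has nonnegative determinant. -/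
def detForm (p q s : R × R) : R :=
  ((-2 ^ 44 : ℤ) : R) *
    (((4 : ℤ) : R) * (height p * height q * height s) ^ 2 +
      twoCos p * height p * (twoCos q * height q) * (twoCos s * height s) +
      ((-1 : ℤ) : R) * ((twoCos p * height q * height s) ^ 2 +
        (height p * twoCos q * height s) ^ 2 + (height p * height q * twoCos s) ^ 2)) +
  ((-1 : ℤ) : R) * (height p * height q * height s) ^ 2

variable {φ : R → S}

namespace IsPolyHom

theorem map_binaryForm (hφ : IsPolyHom φ) (p : R × R) (n : ℕ) (l : List ℤ) :
    φ (binaryForm p n l) = binaryForm (p.map φ φ) n l := by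
  induction l generalizing n with
  | nil => exact hφ.map_intCast 0
  | cons a l ih =>
    simp only [binaryForm, hφ.map_add, hφ.map_mul, hφ.map_pow, hφ.map_intCast, ih, Prod.map_fst,
      Prod.map_snd]

theorem map_gramForm (hφ : IsPolyHom φ) (p q : R × R) (n : ℕ) (l : List (List ℤ)) :
    φ (gramForm p q n l) = gramForm (p.map φ φ) (q.map φ φ) n l := by
  induction l with
  | nil => exact hφ.map_intCast 0
  | cons g l ih => simp only [gramForm, hφ.map_add, hφ.map_mul, hφ.map_binaryForm, ih]

theorem map_zonalSum (hφ : IsPolyHom φ) (a d : ℕ) (p q : R × R) (h t r : R)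
    (D : List (ℕ × List (List ℤ))) (k : ℕ) :
    φ (zonalSum a d p q h t r D k) =
      zonalSum a d (p.map φ φ) (q.map φ φ) (φ h) (φ t) (φ r) D k := by
  induction D generalizing k with
  | nil => exact hφ.map_intCast 0
  | cons b D ih =>
    simp only [zonalSum, hφ.map_add, hφ.map_mul, hφ.map_pow, hφ.map_intCast, hφ.map_gramForm,
      hφ.map_gegenbauer, ih]

theorem map_gegenbauerSum (hφ : IsPolyHom φ) (a d : ℕ) (h u r : R) (A : List ℤ) (k : ℕ) :
    φ (gegenbauerSum a d h u r A k) = gegenbauerSum a d (φ h) (φ u) (φ r) A k := by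
  induction A generalizing k with
  | nil => exact hφ.map_intCast 0
  | cons c A ih =>
    simp only [gegenbauerSum, hφ.map_add, hφ.map_mul, hφ.map_pow, hφ.map_intCast,
      hφ.map_gegenbauer, ih]

theorem map_height (hφ : IsPolyHom φ) (p : R × R) : φ (height p) = height (p.map φ φ) :=
  hφ.map_add _ _

theorem map_twoCos (hφ : IsPolyHom φ) (p : R × R) : φ (twoCos p) = twoCos (p.map φ φ) := by
  simp only [twoCos, hφ.map_add, hφ.map_mul, hφ.map_intCast, Prod.map_fst, Prod.map_snd]

theorem map_fourSinSq (hφ : IsPolyHom φ) (p : R × R) : φ (fourSinSq p) = fourSinSq (p.map φ φ) := by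
  simp only [fourSinSq, hφ.map_add, hφ.map_mul, hφ.map_intCast, Prod.map_fst, Prod.map_snd]

theorem map_tripleForm (hφ : IsPolyHom φ) (a d : ℕ) (D : List (ℕ × List (List ℤ)))
    (p q s : R × R) :
    φ (tripleForm a d D p q s) = tripleForm a d D (p.map φ φ) (q.map φ φ) (s.map φ φ) := by
  simp only [tripleForm, zonalTriple, hφ.map_add, hφ.map_mul, hφ.map_pow, hφ.map_intCast,
    hφ.map_zonalSum, hφ.map_height, hφ.map_twoCos, hφ.map_fourSinSq]

theorem map_pairForm (hφ : IsPolyHom φ) (a d : ℕ) (D : List (ℕ × List (List ℤ))) (A g : List ℤ)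
    (w M : ℤ) (p : R × R) : φ (pairForm a d D A g w M p) = pairForm a d D A g w M (p.map φ φ) := by
  simp only [pairForm, hφ.map_add, hφ.map_mul, hφ.map_pow, hφ.map_intCast, hφ.map_zonalSum,
    hφ.map_binaryForm, hφ.map_gegenbauerSum, hφ.map_height, hφ.map_twoCos, hφ.map_fourSinSq]

theorem map_orderForm (hφ : IsPolyHom φ) (p q s : R × R) :
    φ (orderForm p q s) = orderForm (p.map φ φ) (q.map φ φ) (s.map φ φ) := by
  simp only [orderForm, hφ.map_add, hφ.map_mul, hφ.map_intCast, hφ.map_height, Prod.map_fst]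

theorem map_detForm (hφ : IsPolyHom φ) (p q s : R × R) :
    φ (detForm p q s) = detForm (p.map φ φ) (q.map φ φ) (s.map φ φ) := by
  simp only [detForm, hφ.map_add, hφ.map_mul, hφ.map_pow, hφ.map_intCast, hφ.map_height,
    hφ.map_twoCos]

end IsPolyHom

end Forms

section RealForms

/-- The homogeneous coordinates, summing to `1`, of the cosine `u`; they are nonnegative if `u` is
in `[-1, 1/2]`. -/
noncomputable def chart (u : ℝ) : ℝ × ℝ := ((2 * u + 2) / 3, 1 - (2 * u + 2) / 3)

@[simp]
theorem height_chart (u : ℝ) : height (chart u) = 1 := add_sub_cancel _ _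

@[simp]
theorem twoCos_chart (u : ℝ) : twoCos (chart u) = 2 * u := by
  simp only [twoCos, chart]
  push_cast
  ring

@[simp]
theorem fourSinSq_chart (u : ℝ) : fourSinSq (chart u) = 4 * (1 - u ^ 2) := by
  simp only [fourSinSq, chart]
  push_cast
  ring

theorem orderForm_chart_neg {u v : ℝ} (huv : u ≤ v) (w : ℝ) :
    orderForm (chart u) (chart v) (chart w) < 0 := by
  simp only [orderForm, height_chart]
  push_cast [chart]
  linarith

theorem detForm_chart_neg {u v w : ℝ} (h : 0 ≤ 1 + 2 * u * v * w - u ^ 2 - v ^ 2 - w ^ 2) :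
    detForm (chart u) (chart v) (chart w) < 0 := by
  simp only [detForm, height_chart, twoCos_chart]
  push_cast
  linarith

theorem gramForm_comm (p q : ℝ × ℝ) (n : ℕ) (gs : List (List ℤ)) :
    gramForm p q n gs = gramForm q p n gs := by
  induction gs with
  | nil => rfl
  | cons g gs ih => rw [gramForm, gramForm, ih, mul_comm (binaryForm p n g)]

theorem zonalSum_comm (a d : ℕ) (p q : ℝ × ℝ) (h t r : ℝ) (D : List (ℕ × List (List ℤ))) (k : ℕ) :
    zonalSum a d p q h t r D k = zonalSum a d q p h t r D k := by
  induction D generalizing k with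
  | nil => rfl
  | cons b D ih => rw [zonalSum, zonalSum, ih, gramForm_comm]

variable (a d : ℕ) (D : List (ℕ × List (List ℤ)))

theorem zonalTriple_comm (p q s : ℝ × ℝ) : zonalTriple a d D p q s = zonalTriple a d D q p s := by
  rw [zonalTriple, zonalTriple, zonalSum_comm, mul_comm (height p), mul_comm (twoCos p),
    mul_comm (fourSinSq p)]

theorem tripleForm_swap_left (p q s : ℝ × ℝ) :
    tripleForm a d D p q s = tripleForm a d D q p s := by
  rw [tripleForm, tripleForm, zonalTriple_comm a d D p q, add_comm (zonalTriple a d D p s q)]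

theorem tripleForm_swap_right (p q s : ℝ × ℝ) :
    tripleForm a d D p q s = tripleForm a d D p s q := by
  rw [tripleForm, tripleForm, zonalTriple_comm a d D q s, add_left_comm]

theorem zonalTriple_chart (u v w : ℝ) :
    zonalTriple a d D (chart u) (chart v) (chart w) = zonalSum a d (chart u) (chart v) 1
      (4 * (w - u * v)) (4 ^ 2 * ((1 - u ^ 2) * (1 - v ^ 2))) D 0 := by
  simp only [zonalTriple, height_chart, twoCos_chart, fourSinSq_chart]
  push_cast
  ring_nf

theorem pairForm_chart (A g : List ℤ) (w M : ℤ) (u : ℝ) :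
    pairForm a d D A g w M (chart u) = -(zonalTriple a d D (chart u) (chart u) (chart 1) +
      w * binaryForm (chart u) d g + gegenbauerSum (a + 1) (2 * d) 1 (2 * u) 4 A 0 + M) := by
  simp only [pairForm, zonalTriple, height_chart, twoCos_chart, fourSinSq_chart]
  push_cast
  ring_nf

theorem cast_gegenbauerSum (A : List ℤ) (k : ℕ) :
    ((gegenbauerSum a d 1 2 4 A k : ℤ) : ℝ) = gegenbauerSum a d 1 2 4 A k := by
  have := (isPolyHom_ringHom (Int.castRingHom ℝ)).map_gegenbauerSum a d 1 2 4 A k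
  simpa only [map_one, map_ofNat, eq_intCast] using this

end RealForms

section KernelSums

variable {ι : Type*} {s : Finset ι} {a d : ℕ}

theorem IsPosKernelOn.mul_gramForm {K : ι → ι → ℝ} (hK : IsPosKernelOn s K) (p : ι → ℝ × ℝ) (n : ℕ)
    (gs : List (List ℤ)) : IsPosKernelOn s fun i j => K i j * gramForm (p i) (p j) n gs := by
  induction gs with
  | nil => simpa [gramForm] using IsPosKernelOn.zero (s := s)
  | cons g gs ih =>
    simpa only [gramForm, mul_add, mul_comm (K _ _) (binaryForm _ _ _ * _)] using
      (hK.mul_mul fun i => binaryForm (p i) n g).add ih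

theorem isPosKernelOn_zonalSum {t r : ι → ι → ℝ}
    (h : ∀ k, IsPosKernelOn s fun i j => gegenbauer a (t i j) (r i j) k) (p : ι → ℝ × ℝ)
    (D : List (ℕ × List (List ℤ))) (k : ℕ) :
    IsPosKernelOn s fun i j => zonalSum a d (p i) (p j) 1 (t i j) (r i j) D k := by
  induction D generalizing k with
  | nil => simpa [zonalSum] using IsPosKernelOn.zero (s := s)
  | cons b D ih =>
    have factor_nonneg : (0 : ℝ) ≤ ((2 ^ b.1 : ℤ) : ℝ) := by positivity
    simpa only [zonalSum, one_pow, one_mul] using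
      (((h k).const_mul factor_nonneg).mul_gramForm p (d - k) b.2).add (ih (k + 1))

theorem isPosKernelOn_gegenbauerSum {u r : ι → ι → ℝ}
    (h : ∀ k, IsPosKernelOn s fun i j => gegenbauer a (u i j) (r i j) k) {A : List ℤ}
    (hA : ∀ c ∈ A, 0 ≤ c) (k : ℕ) :
    IsPosKernelOn s fun i j => gegenbauerSum a d 1 (u i j) (r i j) A k := by
  induction A generalizing k with
  | nil => simpa [gegenbauerSum] using IsPosKernelOn.zero (s := s)
  | cons c A ih =>
    have coeff_nonneg : (0 : ℝ) ≤ c := by exact_mod_cast hA c List.mem_cons_self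
    simpa only [gegenbauerSum, one_pow, one_mul] using ((h k).const_mul coeff_nonneg).add
      (ih (fun c hc => hA c (List.mem_cons_of_mem _ hc)) (k + 1))

theorem mul_sq_sum_binaryForm_le_sum_sum_zonalSum {t r : ι → ι → ℝ}
    (h : ∀ k, IsPosKernelOn s fun i j => gegenbauer a (t i j) (r i j) k) (p : ι → ℝ × ℝ) (e : ℕ)
    (g : List ℤ) (gs : List (List ℤ)) (D : List (ℕ × List (List ℤ))) :
    2 ^ e * (∑ i ∈ s, binaryForm (p i) d g) ^ 2 ≤
      ∑ i ∈ s, ∑ j ∈ s, zonalSum a d (p i) (p j) 1 (t i j) (r i j) ((e, g :: gs) :: D) 0 := by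
  have split_head (i j : ι) :
      zonalSum a d (p i) (p j) 1 (t i j) (r i j) ((e, g :: gs) :: D) 0 =
        2 ^ e * (binaryForm (p i) d g * binaryForm (p j) d g) +
          zonalSum a d (p i) (p j) 1 (t i j) (r i j) ((e, gs) :: D) 0 := by
    simp only [zonalSum, gramForm, gegenbauer_zero, Nat.sub_zero]
    push_cast
    ring
  have rest_nonneg :=
    (isPosKernelOn_zonalSum (d := d) h p ((e, gs) :: D) 0).sum_sum_nonneg
  simp only [split_head, Finset.sum_add_distrib, ← Finset.mul_sum, sq, Finset.sum_mul_sum]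
  linarith

end KernelSums

section KissingBound

open Module Set
open scoped RealInnerProductSpace

variable {E : Type*} [NormedAddCommGroup E] [InnerProductSpace ℝ E] {a d : ℕ}

theorem inner_mem_Icc_of_one_le_dist {x y : E} (hx : ‖x‖ = 1) (hy : ‖y‖ = 1) (h : 1 ≤ dist x y) :
    ⟪x, y⟫ ∈ Icc (-1 : ℝ) (1 / 2) := by
  have dist_sq := norm_sub_sq_real x y
  rw [← dist_eq_norm, hx, hy] at dist_sq
  have one_le_dist_sq := one_le_pow₀ h (n := 2)
  refine ⟨?_, by linarith⟩
  simpa [hx, hy] using neg_le_of_abs_le (abs_real_inner_le_norm x y)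

theorem isPosKernelOn_gegenbauer_inner (ha : 0 < a) (hE : finrank ℝ E = a + 2) {S : Finset E}
    (hS : ∀ x ∈ S, ‖x‖ = 1) (k : ℕ) :
    IsPosKernelOn S fun x y => gegenbauer a (2 * ⟪x, y⟫) 4 k := fun c => by
  have scaled := mul_nonneg (pow_nonneg zero_le_two k)
    (sum_sum_gegenbauer_inner_nonneg ha hE S id c k)
  simp only [Finset.mul_sum] at scaled
  refine scaled.trans_eq (Finset.sum_congr rfl fun x hx => Finset.sum_congr rfl fun y hy => ?_)
  rw [mul_left_comm, ← gegenbauer_smul, id, id, hS x hx, hS y hy]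
  norm_num

theorem isPosKernelOn_gegenbauer_orthogonal (ha : 0 < a) (hE : finrank ℝ E = a + 3) {z : E}
    (hz : ‖z‖ = 1) {S : Finset E} (hS : ∀ x ∈ S, ‖x‖ = 1) (k : ℕ) :
    IsPosKernelOn S fun x y => gegenbauer a (4 * (⟪x, y⟫ - ⟪x, z⟫ * ⟪y, z⟫))
      (4 ^ 2 * ((1 - ⟪x, z⟫ ^ 2) * (1 - ⟪y, z⟫ ^ 2))) k := fun c => by
  have scaled := mul_nonneg (pow_nonneg zero_le_four k)
    (sum_sum_gegenbauer_orthogonal_nonneg ha hE hz S id c k)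
  simp only [Finset.mul_sum] at scaled
  refine scaled.trans_eq (Finset.sum_congr rfl fun x hx => Finset.sum_congr rfl fun y hy => ?_)
  rw [mul_left_comm, ← gegenbauer_smul, id, id, hS x hx, hS y hy, one_pow]

theorem card_sub_one_mul_le_of_forms_nonneg (ha : 0 < a) (hE : finrank ℝ E = a + 3) {e : ℕ}
    {g : List ℤ} {gs : List (List ℤ)} {D : List (ℕ × List (List ℤ))} {A : List ℤ} {w M : ℤ}
    (hA : ∀ c ∈ A, 0 ≤ c)
    (pair_nonneg : ∀ u ∈ Icc (-1 : ℝ) (1 / 2),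
      0 ≤ pairForm a d ((e, g :: gs) :: D) A g (2 * 2 ^ e * w) M (chart u))
    (triple_nonneg : ∀ u ∈ Icc (-1 : ℝ) (1 / 2), ∀ v ∈ Icc (-1 : ℝ) (1 / 2),
      ∀ w ∈ Icc (-1 : ℝ) (1 / 2), 0 ≤ 1 + 2 * u * v * w - u ^ 2 - v ^ 2 - w ^ 2 →
        0 ≤ tripleForm a d ((e, g :: gs) :: D) (chart u) (chart v) (chart w))
    {S : Finset E} (hS : S.Nonempty) (hnorm : ∀ x ∈ S, ‖x‖ = 1)
    (hdist : ∀ x ∈ S, ∀ y ∈ S, x ≠ y → 1 ≤ dist x y) :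
    (S.card - 1) * M ≤ 2 ^ e * w ^ 2 + gegenbauerSum (a + 1) (2 * d) 1 2 4 A 0 := by
  classical
  have hinner : ∀ x ∈ S, ∀ y ∈ S, x ≠ y → ⟪x, y⟫ ∈ Icc (-1 : ℝ) (1 / 2) := fun x hx y hy hxy =>
    inner_mem_Icc_of_one_le_dist (hnorm x hx) (hnorm y hy) (hdist x hx y hy hxy)
  suffices ((S.card : ℝ) - 1) * M ≤
      2 ^ e * w ^ 2 + gegenbauerSum (a + 1) (2 * d) (1 : ℝ) 2 4 A 0 by
    rw [← cast_gegenbauerSum] at this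
    exact_mod_cast this
  refine card_sub_one_mul_le_of_three_point hS (by positivity)
    (g := fun y y' z =>
      zonalTriple a d ((e, g :: gs) :: D) (chart ⟪y, z⟫) (chart ⟪y', z⟫) (chart ⟪y, y'⟫))
    (φ := fun y z => binaryForm (chart ⟪y, z⟫) d g)
    (h := fun y z => gegenbauerSum (a + 1) (2 * d) 1 (2 * ⟪y, z⟫) 4 A 0)
    (sq_le := fun z hz => ?_) (sum_h := ?_) (diag_h := fun z hz => ?_)
    (triple := fun p hp q hq r hr hpq hpr hqr => ?_) (pair := fun z hz y hy hyz => ?_)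
  · simp only [zonalTriple_chart]
    exact mul_sq_sum_binaryForm_le_sum_sum_zonalSum
      (isPosKernelOn_gegenbauer_orthogonal ha hE (hnorm z hz) fun x hx =>
        hnorm x (Finset.mem_of_mem_erase hx)) _ e g gs D
  · rw [Finset.sum_comm]
    exact (isPosKernelOn_gegenbauerSum
      (isPosKernelOn_gegenbauer_inner a.succ_pos hE hnorm) hA 0).sum_sum_nonneg
  · rw [inner_self_eq_one_of_norm_eq_one (hnorm z hz), mul_one]
  · have := triple_nonneg _ (hinner p hp q hq hpq) _ (hinner p hp r hr hpr) _
      (hinner q hq r hr hqr) (gram_det_nonneg (hnorm p hp) (hnorm q hq) (hnorm r hr))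
    rw [tripleForm] at this
    push_cast at this
    rw [real_inner_comm p q, real_inner_comm p r, real_inner_comm q r]
    linarith
  · have := pair_nonneg _ (hinner y hy z hz hyz)
    rw [pairForm_chart] at this
    push_cast at this
    rw [inner_self_eq_one_of_norm_eq_one (hnorm y hy)]
    linarith

end KissingBound

/-! ### The dual solution -/

/-- The coefficients of the binary form whose sum over the other points enters the three-point bound
squared. -/
def mainRow : List ℤ :=
  [-38512182, 377863410, -9802175551, 90581211688, -435846636445, 1260716303461, -2345934057484,
   2878023732105, -2331893787068, 1196236802467, -357823166505, 47383723381, 2351293713,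
   -1690112972, 230219273, -18655326, -468698]

/-- The dual solution of the semidefinite program for the three-point bound in dimension `15` of
degree `16`, rounded to integers: the block number `k` consists of an exponent and of the rows of a
Cholesky factor of the coefficient matrix of the zonal harmonics of degree `k`. -/
def blocks : List (ℕ × List (List ℤ)) :=
  [(154, [mainRow,
      [199626058, -105989305, -1628913713, 29799825495, -40763956905, -416078228766, 1675758524941,
       -2767679148156, 2476226209959, -1254436654986, 328532979401, -33275097257, -714813176,
       183776653, 103365084, -21558119, -208432],
      [0, 1649490449, -54957792004, 516152305933, -2358550281107, 6324002445960, -10760983895907,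
       11959510930524, -8643827134944, 3963340326747, -1097282553153, 164746974092, -7983933885,
       -1076225851, 123940313, -3071120, -253094],
      [0, 0, 22529588289, -220338090574, 985933405431, -2472458127967, 3777602971257,
       -3818769925163, 2628669040115, -1239787452079, 452574100026, -142394526055, 32396393580,
       -4045570763, 88464378, 8154272, 253445],
      [0, 0, 0, 55351182641, -490565079496, 1985975076051, -4585283266678, 6627276890811,
       -6308781464704, 4027035892119, -1703710104710, 467703665305, -79037211153, 5968914382,
       32782845, -2126787, -7441],
      [0, 0, 0, 0, 85044871926, -557873851005, 1769100298894, -3361911084838, 4028254440059,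
       -3105014286646, 1528118355023, -467674765824, 84021703681, -8150059475, 358083169, 1242045,
       40037],
      [0, 0, 0, 0, 0, 105440917650, -558368678521, 1288464622392, -1651246191724, 1285772742072,
       -629890430194, 187852606247, -33366957326, 3827907103, -256101929, 6210175, -223108],
      [0, 0, 0, 0, 0, 0, 99074187279, -475416768834, 951178142347, -1009872016969, 611280608661,
       -211145221467, 38299643585, -2906194088, -67413358, 6525354, 453959],
      [0, 0, 0, 0, 0, 0, 0, 190756095445, -633868987860, 833269312072, -610639155773, 268156807263,
       -66468127920, 8489741592, -425238736, -3635006, 120967],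
      [0, 0, 0, 0, 0, 0, 0, 0, 60700576477, -127789214434, 128142706879, -80151633762, 26927945813,
       -4746686533, 472509247, -5008883, -448437],
      [0, 0, 0, 0, 0, 0, 0, 0, 0, 36173342850, -52627962658, 32201359457, -12121678756, 2292591754,
       -219312144, 9335327, 147526],
      [0, 0, 0, 0, 0, 0, 0, 0, 0, 0, 11832296682, -13386424205, 5707760731, -1201012799, 58967003,
       -1357978, 200486],
      [0, 0, 0, 0, 0, 0, 0, 0, 0, 0, 0, 5415797034, -2726538199, 291375488, -37761007, -3835956,
       122082],
      [0, 0, 0, 0, 0, 0, 0, 0, 0, 0, 0, 0, 814825623, -260084320, 43888847, -4593567, -212471],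
      [0, 0, 0, 0, 0, 0, 0, 0, 0, 0, 0, 0, 0, 301147518, -85262866, 722729, -48229],
      [0, 0, 0, 0, 0, 0, 0, 0, 0, 0, 0, 0, 0, 0, 27418325, -448640, -176275],
      [0, 0, 0, 0, 0, 0, 0, 0, 0, 0, 0, 0, 0, 0, 0, 1140975, -27741],
      [0, 0, 0, 0, 0, 0, 0, 0, 0, 0, 0, 0, 0, 0, 0, 0, 568]]),
   (148, [[380681410, 1958202303, -607862754, -80932738084, 697006986327, -2583410433690,
       5105187881209, -5939246783394, 4246081741782, -1857775589181, 473563070549, -67878474775,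
       5125856117, -109003639, 12857657, 1370814],
      [0, 7179402351, -133891336630, 966934485981, -3637824809406, 8165753904409, -11709907681824,
       10932439190298, -6565203514259, 2469631869742, -555734326628, 68234548860, -3364536504,
       -910798, -40351766, -400229],
      [0, 0, 65710432865, -549216169772, 2012863383039, -4050809913862, 4997936157640,
       -4126871423317, 2308942839199, -865059336559, 229091462498, -42863190427, 4348303976,
       152536290, -93151654, -1528185],
      [0, 0, 0, 134642920817, -1175588292201, 4320486043833, -8556707041122, 9927991867190,
       -7015278320648, 3017312385174, -749536569730, 93747126310, -1428046906, -1089233916,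
       67247663, 2187218],
      [0, 0, 0, 0, 202928212761, -1301870069438, 3431001921207, -4832014651056, 3907179214834,
       -1901937470265, 579498193871, -111949826709, 14892345139, -1464805428, 29802266, 1526900],
      [0, 0, 0, 0, 0, 384393880379, -1814036817808, 3732162915195, -4198046877907, 2713873591935,
       -1019107648542, 213402554599, -22249930050, 859394401, 13830796, 779844],
      [0, 0, 0, 0, 0, 0, 371649669842, -1349518056895, 2093730394000, -1713951713962, 765302494975,
       -186944198979, 23430286551, -1218885481, 42437256, 213074],
      [0, 0, 0, 0, 0, 0, 0, 208274562428, -495084772066, 511037230092, -303199532416, 105915416945,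
       -18809662530, 1509517984, -90082896, -867195],
      [0, 0, 0, 0, 0, 0, 0, 0, 54051992548, -105814937964, 70076148136, -20345023790, 3250981930,
       -284460003, -16254841, -126441],
      [0, 0, 0, 0, 0, 0, 0, 0, 0, 25426330443, -21051283819, 7178746495, -1661548414, 51180357,
       -21348359, 735985],
      [0, 0, 0, 0, 0, 0, 0, 0, 0, 0, 37455194983, -32981097046, 9421487856, -1249967758, 37251360,
       1665899],
      [0, 0, 0, 0, 0, 0, 0, 0, 0, 0, 0, 5474794445, -436875157, -252321610, -22279680, -225878],
      [0, 0, 0, 0, 0, 0, 0, 0, 0, 0, 0, 0, 1704080849, -676003946, 91046851, 1364091],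
      [0, 0, 0, 0, 0, 0, 0, 0, 0, 0, 0, 0, 0, 136348934, -34747575, -913152],
      [0, 0, 0, 0, 0, 0, 0, 0, 0, 0, 0, 0, 0, 0, 32947485, 92393],
      [0, 0, 0, 0, 0, 0, 0, 0, 0, 0, 0, 0, 0, 0, 0, 411246]]),
   (142, [[937356912, -15950998386, 181810479319, -1033091315785, 3345900296168, -6633194342291,
       8418658767636, -7050718965987, 3942508383941, -1443458420189, 330343147458, -46386229153,
       4193173625, -245118702, -8038582],
      [0, 25185159264, -326131406255, 1825392105243, -5416553020137, 9527354984856, -10577522648439,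
       7498264190106, -3351579274299, 936534717681, -172582644683, 23682591525, -1909664280,
       34473956, 1811357],
      [0, 0, 100728202218, -792437594766, 2964732460280, -6210903563390, 7846032583392,
       -6147902899417, 2930320340482, -805429820403, 114490925774, -7435874222, 146437091,
       100221349, 891008],
      [0, 0, 0, 242525460310, -1728418576501, 5126265725905, -8002975574251, 7082429258787,
       -3662540418467, 1090174666615, -168652705071, 9529772034, 381177604, -49827082, -1299203],
      [0, 0, 0, 0, 134695941117, -778102948969, 1821752213142, -2219418098636, 1449080514042,
       -488908096026, 71312377577, 2096344940, -1206229280, -15306476, 1250113],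
      [0, 0, 0, 0, 0, 262058797987, -1114539999954, 2004497527850, -1925173729657, 1017283865434,
       -287817499416, 41136817604, -1979493339, -24865045, -1694910],
      [0, 0, 0, 0, 0, 0, 127097235327, -453131196093, 658878884305, -488073805584, 193311991406,
       -39726109663, 3697801161, -52028824, 54592],
      [0, 0, 0, 0, 0, 0, 0, 97339281101, -176522506070, 156941802855, -83510907062, 20983946256,
       -2654805184, 119888661, 2455155],
      [0, 0, 0, 0, 0, 0, 0, 0, 74805177743, -46364991496, -3307158961, 7386945475, -2108759998,
       162315191, 7375404],
      [0, 0, 0, 0, 0, 0, 0, 0, 0, 14977516254, -14676073817, 5786167766, -923623598, 31283898,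
       1181369],
      [0, 0, 0, 0, 0, 0, 0, 0, 0, 0, 9260006889, -4096417323, 795657653, -109172682, -2340732],
      [0, 0, 0, 0, 0, 0, 0, 0, 0, 0, 0, 337994819, -77368564, 17181095, -145708],
      [0, 0, 0, 0, 0, 0, 0, 0, 0, 0, 0, 0, 143115836, -20177548, -13820],
      [0, 0, 0, 0, 0, 0, 0, 0, 0, 0, 0, 0, 0, 18678687, 704591],
      [0, 0, 0, 0, 0, 0, 0, 0, 0, 0, 0, 0, 0, 0, 1332258]]),
   (134, [[3717177495, -76802370442, 725063950817, -3197175401740, 7648845659082, -10711418157933,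
       9168093587046, -4923191250545, 1705565615759, -386779685126, 63936482342, -8485826223,
       293849304, 25781964],
      [0, 64473185237, -668092426405, 3047527833268, -7172249074777, 9643377382923, -7590688862978,
       3224538621745, -514556067783, -65982378673, 19750995182, 1820253297, -459074631, -10910299],
      [0, 0, 156371747923, -1629473038250, 6772422846649, -14354392327978, 17136877327233,
       -11970104607922, 4928491288887, -1171409261593, 155745408437, -11244629355, 342871480,
       6627002],
      [0, 0, 0, 348968592818, -1879552138459, 4449299246798, -5630980517475, 4117461007893,
       -1833274483312, 479688677697, -59165546489, 916376703, 372020423, 13808130],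
      [0, 0, 0, 0, 364274549868, -1509235916963, 2570685427180, -2227857427541, 971526516942,
       -189444455858, 1626514323, 3200210312, 164290310, 7853327],
      [0, 0, 0, 0, 0, 521187504053, -1826436351407, 2654048401068, -1998626700108, 821482599034,
       -181159328095, 19948863194, -712847775, -29341108],
      [0, 0, 0, 0, 0, 0, 173536925563, -450018133755, 497992861494, -272720441438, 74746712138,
       -9197785821, 369249618, -2797638],
      [0, 0, 0, 0, 0, 0, 0, 106688132152, -185070562372, 121176328536, -28519781563, 3209913275,
       -522307547, -13656441],
      [0, 0, 0, 0, 0, 0, 0, 0, 27557076626, -31979941764, 12869230913, -3361843626, 499434247,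
       15462176],
      [0, 0, 0, 0, 0, 0, 0, 0, 0, 9281128063, -8287299412, 2113613475, -156006647, -4107917],
      [0, 0, 0, 0, 0, 0, 0, 0, 0, 0, 5496941420, -862558379, -119497419, -7341704],
      [0, 0, 0, 0, 0, 0, 0, 0, 0, 0, 0, 203219704, 1816185, 2799185],
      [0, 0, 0, 0, 0, 0, 0, 0, 0, 0, 0, 0, 87950479, 3209234],
      [0, 0, 0, 0, 0, 0, 0, 0, 0, 0, 0, 0, 0, 2553973]]),
   (128, [[15658197177, -293768871452, 2002524988781, -6836684759636, 13063807465729,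
       -14813520580631, 10066585160746, -3944406846886, 801356122185, -65558263207, 2065896761,
       -486242509, -2499683],
      [0, 27830252635, -363173615198, 1862401959559, -4933211215974, 7473515118913, -6714672842363,
       3584489955972, -1089341266849, 165888761318, -8676491989, -313166809, -1612835],
      [0, 0, 93814340910, -887939003061, 3048906462029, -5167814857021, 4724684540222,
       -2397519380120, 667020523984, -93791693903, 5014628112, -147209914, -5485360],
      [0, 0, 0, 112701754118, -710445296173, 1815754350316, -2343417217749, 1643366478591,
       -634913379623, 132958868472, -13085972714, 472387391, 1746000],
      [0, 0, 0, 0, 394315901519, -1377110253987, 2017544471602, -1562859333470, 684165760526,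
       -165661694806, 21715300107, -1102970636, -34475936],
      [0, 0, 0, 0, 0, 257729205840, -712101613493, 852182649233, -495028297680, 133530367512,
       -16716802863, 653072057, 32676228],
      [0, 0, 0, 0, 0, 0, 21600991766, -28265314832, 13213054521, -2811033483, -238955959, 76850211,
       6820152],
      [0, 0, 0, 0, 0, 0, 0, 25018219504, -42557812773, 18938540489, -4319635611, 399238110,
       18644104],
      [0, 0, 0, 0, 0, 0, 0, 0, 9306367155, -5557807824, 1920419841, -219927166, -7685441],
      [0, 0, 0, 0, 0, 0, 0, 0, 0, 2131285562, -679353491, 86119694, -2284235],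
      [0, 0, 0, 0, 0, 0, 0, 0, 0, 0, 121794584, 12492099, 3094519],
      [0, 0, 0, 0, 0, 0, 0, 0, 0, 0, 0, 29477350, 2564909],
      [0, 0, 0, 0, 0, 0, 0, 0, 0, 0, 0, 0, 474422]]),
   (120, [[26426530386, -411883510650, 2300717921854, -6199486195039, 8958561165405, -7274357280757,
       3257758584801, -673501674340, 3838169790, 18167735933, -1471322272, -50782572],
      [0, 123524811013, -1217547995543, 4632467110312, -8921140876766, 9615608658557,
       -5846282831514, 1925398508516, -305118387521, 20192412735, -1206760339, 18388879],
      [0, 0, 167903774247, -1320253692180, 3724251564654, -5203239319343, 4088687498794,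
       -1844333673205, 445622032975, -48565729021, 1062186980, 68038641],
      [0, 0, 0, 126636953603, -507613334089, 706142040893, -394850618612, 68447339815, 7375158209,
       -5706137578, 1205258622, 16273853],
      [0, 0, 0, 0, 188472688647, -502330948783, 516585550918, -223109780768, 31274738471,
       1557281648, -917695646, -40056671],
      [0, 0, 0, 0, 0, 75862767354, -193659038447, 171350417151, -61802516193, 9227895459,
       -461488884, -12867613],
      [0, 0, 0, 0, 0, 0, 25129120659, -26606518486, 8432732219, -475731178, -194818253, 264615],
      [0, 0, 0, 0, 0, 0, 0, 9468125194, -10300785055, 3362219166, -428688226, -5300188],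
      [0, 0, 0, 0, 0, 0, 0, 0, 2214770756, -807480709, 143333491, -482511],
      [0, 0, 0, 0, 0, 0, 0, 0, 0, 235201092, -6438756, 3414866],
      [0, 0, 0, 0, 0, 0, 0, 0, 0, 0, 33813068, 3044423],
      [0, 0, 0, 0, 0, 0, 0, 0, 0, 0, 0, 612021]]),
   (112, [[72589787735, -918916168245, 4324992879378, -10076787903758, 12909205286076,
       -9438634438630, 3828494372930, -772381195538, 60102353629, 389588903, 8574783],
      [0, 23187152662, -204110800749, 685293629648, -1133469823986, 972656135062, -437291763008,
       98562633429, -10385805214, 523644364, 3238003],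
      [0, 0, 63915904428, -447027465764, 1066468662848, -1195126309724, 665750609472, -186458481437,
       23389150129, -797113231, 22059397],
      [0, 0, 0, 34030293302, -129895784071, 231941666980, -177130990782, 60436087222, -7284297405,
       -162665300, -14158791],
      [0, 0, 0, 0, 18176071129, -53926285390, 60656777039, -28549886409, 5646402997, -343134747,
       -1340843],
      [0, 0, 0, 0, 0, 9824435845, -14301530808, 8289266864, -1542930170, 103560334, 2504708],
      [0, 0, 0, 0, 0, 0, 3592585006, -4561931300, 1818811053, -233084137, -13594],
      [0, 0, 0, 0, 0, 0, 0, 2877805294, -1024898349, 255083316, 6661508],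
      [0, 0, 0, 0, 0, 0, 0, 0, 308490426, -45088075, 1491501],
      [0, 0, 0, 0, 0, 0, 0, 0, 0, 23045675, 1952157],
      [0, 0, 0, 0, 0, 0, 0, 0, 0, 0, 573496]]),
   (102, [[144198568709, -1332310761417, 4895395179806, -9350761324445, 10005483147946,
       -5939483756609, 1836816652396, -244457621058, 8824250043, 65910275],
      [0, 498407054345, -2323801544065, 4470105891034, -4674380287827, 2785934599814, -880854380890,
       124162085949, -9417260564, -308844978],
      [0, 0, 43106463153, -187190780355, 305028894128, -231912976955, 85815969420, -13449116020,
       533466752, -5131714],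
      [0, 0, 0, 34997537072, -116350223811, 128378452241, -60703907370, 10664808409, -657891101,
       -11916017],
      [0, 0, 0, 0, 11183946203, -24826571010, 21502057208, -7105988518, 867344834, 2497010],
      [0, 0, 0, 0, 0, 7102756278, -7607705545, 3585421064, -404805144, 5901002],
      [0, 0, 0, 0, 0, 0, 1416298369, -1030938801, 202229985, 175662],
      [0, 0, 0, 0, 0, 0, 0, 350484105, -56997581, 1929075],
      [0, 0, 0, 0, 0, 0, 0, 0, 24098479, 929963],
      [0, 0, 0, 0, 0, 0, 0, 0, 0, 1450902]]),
   (84, [[427837531235, -3154028844383, 8804390607297, -12172022530735, 9004683865944,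
       -3553294948287, 690331766443, -51256316234, 17311230],
      [0, 328644112920, -1953876085948, 4162458526076, -4123896305154, 2015708587585, -460398703666,
       38790883189, 7544987],
      [0, 0, 280636533784, -1029620993950, 1344525394409, -788309712065, 208009173196, -20610316134,
       31372963],
      [0, 0, 0, 206709465201, -556408989952, 486343531918, -166656204871, 19265304095, -2614779],
      [0, 0, 0, 0, 75544860817, -139421534449, 77051031006, -11817072718, -27998267],
      [0, 0, 0, 0, 0, 34572275938, -31524651810, 6531012149, -11463474],
      [0, 0, 0, 0, 0, 0, 7128434343, -1774737832, 68463826],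
      [0, 0, 0, 0, 0, 0, 0, 819707496, -69761069],
      [0, 0, 0, 0, 0, 0, 0, 0, 87136418]]),
   (80, [[1069073369943, -6122117782158, 11070281583021, -9628823611831, 4687288402053,
       -993360712947, -16787544675, 15857100975],
      [0, 59180025270, -341542244332, 530132162291, -324769883255, 95620089610, -15452845404,
       892201815],
      [0, 0, 79863965060, -147091919415, 85684863312, -27172380703, 6729844660, -608357524],
      [0, 0, 0, 50744719645, -81457836889, 33706896043, -2128461851, -391550961],
      [0, 0, 0, 0, 12471414046, -14285336465, 3605469217, -121950093],
      [0, 0, 0, 0, 0, 1877122751, -1067664848, 110785112],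
      [0, 0, 0, 0, 0, 0, 317496333, -65485283],
      [0, 0, 0, 0, 0, 0, 0, 29998635]]),
   (62, [[1282956771366, -6556080007774, 11682231596797, -9043595282329, 3056088835356,
       -362711435193, 389227567],
      [0, 1112700576382, -3469218178204, 3733955491275, -1632231454753, 234672638162, -302268513],
      [0, 0, 786228995903, -1633671696038, 976947688286, -158866379634, -305156398],
      [0, 0, 0, 326100031239, -338628320550, 70156530872, -225893223],
      [0, 0, 0, 0, 55826493720, -29324900949, 2257872101],
      [0, 0, 0, 0, 0, 13226023537, -3430177547],
      [0, 0, 0, 0, 0, 0, 1620648931]]),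
   (50, [[3598111186589, -12817599096958, 15303513426392, -7163562298016, 1077786139449,
       -5181706514],
      [0, 2698385740640, -6075203508228, 3890821776954, -669748718743, -101320184],
      [0, 0, 988391055893, -930530245458, 173572304801, -2732339349],
      [0, 0, 0, 270853597816, -126904627520, 4212066903],
      [0, 0, 0, 0, 101125438738, -31842039629],
      [0, 0, 0, 0, 0, 14407559206]]),
   (40, [[4501325312464, -10610110020061, 7096578814050, -1330708246843, 17865657020],
      [0, 1297861502546, -1528670652746, 480975451322, -43055927579],
      [0, 0, 682740667224, -519011977195, 80835174204],
      [0, 0, 0, 277333688431, -70803247412],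
      [0, 0, 0, 0, 46983187750]]),
   (28, [[6504336602144, -11063944724851, 5342349635214, -702634139482],
      [0, 3225097373393, -3103149007759, 584807587898],
      [0, 0, 854375850576, -232990295200],
      [0, 0, 0, 179776251520]]),
   (16, [[14731072525425, -15572295074790, 3248770001850],
      [0, 3166485452277, -1239789650974],
      [0, 0, 651668200320]]),
   (16, [[252239261164, -119163665256],
      [0, 46280058254]]),
   (16, [[3860103538]])]

/-- The coefficients of the two-point part of the dual solution, in the basis of the zonal
harmonics. -/
def linCoeffs : List ℤ :=
  [511495573878078433699143046770471013439453952641398593,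
   35147603386907844761257945721567032788518871450378070283409,
   5707214828046905197257256748219197272336524748303431118896,
   1235780856939949647975827254164905316994822499693550596693,
   18708585435251365251248572547077937752267252563208641330,
   439674698691154332234557315714857601286494764859527043,
   94206397987276621603234590883056356318635195976408218,
   83591648622041651435695891702035662702811889245448,
   10846798974118077209399865383567676722624972115, 23453969505407980397255454821017690805551892,
   500012634507125907743354961808188652385902, 25340225355733286668557010892675070615188,
   1333418373049054138447849289405849877051, 15008718889304293281457353010478911056,
   133010509875946897917405377143784240, 2460499119976217244107745037404458,
   71174160367700381013940597525197, 1244545106443581442893132036502, 15752287652529189348666481742,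
   266629559895694844504878309, 4420841019616573103953351, 65235500585950684585915,
   944533722608043080056, 13722584135188410537, 190096974080027226]

section Certificate

open Set PackedTensor

/-- The homogeneous coordinates of the variable number `i`, as expressions. -/
def coordPair (i : ℕ) : PolyExpr (ℕ ⊕ ℕ) × PolyExpr (ℕ ⊕ ℕ) := (.var (.inl i), .var (.inr i))

/-- The pair form of the dual solution; the constants are `2 · 2¹⁵⁴ · w` and `M = 2²⁰⁰`, where the
weight `w = 579933461` of the linear part belongs to the dual solution as well. -/
def pairPoly : BoxPoly :=
  ⟨[32], 255, 156,
    pairForm 12 16 blocks linCoeffs mainRow (2 * 2 ^ 154 * 579933461) (2 ^ 200) (coordPair 0)⟩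

/-- The triple form of the dual solution, preceded by three forms that are negative on the
increasing triples of cosines that occur in a configuration of unit vectors. -/
def triplePolys : List BoxPoly :=
  [⟨[1, 1, 1], 63, 0, orderForm (coordPair 0) (coordPair 1) (coordPair 2)⟩,
   ⟨[1, 1, 1], 63, 0, orderForm (coordPair 1) (coordPair 2) (coordPair 0)⟩,
   ⟨[2, 2, 2], 63, 0, detForm (coordPair 0) (coordPair 1) (coordPair 2)⟩,
   ⟨[16, 16, 16], 274, 165, tripleForm 12 16 blocks (coordPair 0) (coordPair 1) (coordPair 2)⟩]

theorem valid_pairPoly : pairPoly.valid = true := by decide +kernel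

theorem subdivide_pairPoly : subdivide (List.replicate 8 0) [pairPoly.toTensor] = true := by
  decide +kernel

theorem valid_of_mem_triplePolys : ∀ P ∈ triplePolys, P.valid = true := by decide +kernel

/-- The order of halving the axes for the triple form, after the first halving of the axis `0`. -/
def tripleAxes : List ℕ := 1 :: 2 :: (List.replicate 8 [0, 1, 2]).flatten

theorem subdivide_lower_triplePolys :
    subdivide tripleAxes ((triplePolys.map BoxPoly.toTensor).map (lower 0)) = true := by
  decide +kernel

theorem subdivide_upper_triplePolys :
    subdivide tripleAxes ((triplePolys.map BoxPoly.toTensor).map (upper 0)) = true := by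
  decide +kernel

theorem subdivide_triplePolys :
    subdivide (0 :: tripleAxes) (triplePolys.map BoxPoly.toTensor) = true :=
  subdivide_cons_of_halves subdivide_lower_triplePolys subdivide_upper_triplePolys

theorem linCoeffs_nonneg : ∀ c ∈ linCoeffs, 0 ≤ c := by decide +kernel

theorem gegenbauerSum_linCoeffs_lt :
    2 ^ 154 * 579933461 ^ 2 + gegenbauerSum 13 32 1 2 4 linCoeffs 0 < (4866 * 2 ^ 200 : ℤ) := by
  decide +kernel

theorem map_eval_coordPair (u : ℕ → ℝ) (i : ℕ) :
    (coordPair i).map (PolyExpr.eval Int.cast (cubePoint fun j => (chart (u j)).1))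
      (PolyExpr.eval Int.cast (cubePoint fun j => (chart (u j)).1)) = chart (u i) :=
  rfl

theorem chart_fst_mem_unitCube {u : ℕ → ℝ} (hu : ∀ i, u i ∈ Icc (-1 : ℝ) (1 / 2)) :
    (fun i => (chart (u i)).1) ∈ unitCube := by
  refine ⟨fun i => ?_, fun i => ?_⟩ <;>
    simp only [chart, Pi.zero_apply, Pi.one_apply] <;>
    linarith [(hu i).1, (hu i).2]

theorem pairForm_chart_nonneg (u : ℝ) (hu : u ∈ Icc (-1 : ℝ) (1 / 2)) :
    0 ≤ pairForm 12 16 blocks linCoeffs mainRow (2 * 2 ^ 154 * 579933461) (2 ^ 200) (chart u) := by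
  obtain ⟨P, hP, nonneg⟩ := BoxPoly.exists_nonneg_of_subdivide (Ps := [pairPoly])
    (List.forall_mem_singleton.2 valid_pairPoly) subdivide_pairPoly
    (chart_fst_mem_unitCube fun _ => hu)
  rwa [List.mem_singleton.1 hP, pairPoly, (PolyExpr.isPolyHom_eval _).map_pairForm,
    map_eval_coordPair] at nonneg

theorem tripleForm_chart_nonneg_of_le {u v w : ℝ} (hu : u ∈ Icc (-1 : ℝ) (1 / 2))
    (hv : v ∈ Icc (-1 : ℝ) (1 / 2)) (hw : w ∈ Icc (-1 : ℝ) (1 / 2)) (huv : u ≤ v) (hvw : v ≤ w)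
    (hdet : 0 ≤ 1 + 2 * u * v * w - u ^ 2 - v ^ 2 - w ^ 2) :
    0 ≤ tripleForm 12 16 blocks (chart u) (chart v) (chart w) := by
  let cosines : ℕ → ℝ
    | 0 => u
    | 1 => v
    | _ => w
  have mem : ∀ i, cosines i ∈ Icc (-1 : ℝ) (1 / 2)
    | 0 => hu
    | 1 => hv
    | _ + 2 => hw
  obtain ⟨P, hP, nonneg⟩ := BoxPoly.exists_nonneg_of_subdivide valid_of_mem_triplePolys
    subdivide_triplePolys (chart_fst_mem_unitCube mem)
  have eval := PolyExpr.isPolyHom_eval (cubePoint fun i => (chart (cosines i)).1)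
  simp only [triplePolys, List.mem_cons, List.not_mem_nil, or_false] at hP
  rcases hP with rfl | rfl | rfl | rfl
  · rw [eval.map_orderForm] at nonneg
    exact absurd nonneg (orderForm_chart_neg huv w).not_ge
  · rw [eval.map_orderForm] at nonneg
    exact absurd nonneg (orderForm_chart_neg hvw u).not_ge
  · rw [eval.map_detForm] at nonneg
    exact absurd nonneg (detForm_chart_neg hdet).not_ge
  · rwa [eval.map_tripleForm] at nonneg

theorem forall_of_swap_of_forall_le {α : Type*} [LinearOrder α] {p : α → α → α → Prop}
    (swap_left : ∀ a b c, p b a c → p a b c) (swap_right : ∀ a b c, p a c b → p a b c)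
    (sorted : ∀ a b c, a ≤ b → b ≤ c → p a b c) (a b c : α) : p a b c := by
  have of_le (a b c : α) (hbc : b ≤ c) : p a b c := by
    rcases le_total a b with hab | hba
    · exact sorted a b c hab hbc
    rcases le_total a c with hac | hca
    · exact swap_left a b c (sorted b a c hba hac)
    · exact swap_left a b c (swap_right b a c (sorted b c a hbc hca))
  rcases le_total b c with hbc | hcb
  · exact of_le a b c hbc
  · exact swap_right a b c (of_le a c b hcb)

theorem tripleForm_chart_nonneg (u : ℝ) (hu : u ∈ Icc (-1 : ℝ) (1 / 2)) (v : ℝ)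
    (hv : v ∈ Icc (-1 : ℝ) (1 / 2)) (w : ℝ) (hw : w ∈ Icc (-1 : ℝ) (1 / 2))
    (hdet : 0 ≤ 1 + 2 * u * v * w - u ^ 2 - v ^ 2 - w ^ 2) :
    0 ≤ tripleForm 12 16 blocks (chart u) (chart v) (chart w) := by
  refine forall_of_swap_of_forall_le (p := fun u v w => u ∈ Icc (-1 : ℝ) (1 / 2) →
    v ∈ Icc (-1 : ℝ) (1 / 2) → w ∈ Icc (-1 : ℝ) (1 / 2) →
    0 ≤ 1 + 2 * u * v * w - u ^ 2 - v ^ 2 - w ^ 2 →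
    0 ≤ tripleForm 12 16 blocks (chart u) (chart v) (chart w)) ?_ ?_ ?_ u v w hu hv hw hdet
  · intro u v w h hu hv hw hdet
    rw [tripleForm_swap_left]
    exact h hv hu hw (by linarith)
  · intro u v w h hu hv hw hdet
    rw [tripleForm_swap_right]
    exact h hu hw hv (by linarith)
  · intro u v w huv hvw hu hv hw
    exact tripleForm_chart_nonneg_of_le hu hv hw huv hvw

end Certificate

theorem kissing_number_dim15_le_4866_general {E : Type*} [NormedAddCommGroup E]
    [InnerProductSpace ℝ E] (hE : Module.finrank ℝ E = 15) (S : Finset E)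
    (hnorm : ∀ x ∈ S, ‖x‖ = 1) (hdist : ∀ x ∈ S, ∀ y ∈ S, x ≠ y → 1 ≤ dist x y) :
    S.card ≤ 4866 := by
  rcases S.eq_empty_or_nonempty with rfl | hS
  · exact Nat.zero_le _
  obtain ⟨gs, D, blocks_eq⟩ : ∃ gs D, blocks = (154, mainRow :: gs) :: D := ⟨_, _, rfl⟩
  have pair_nonneg := pairForm_chart_nonneg
  have triple_nonneg := tripleForm_chart_nonneg
  rw [blocks_eq] at pair_nonneg triple_nonneg
  have bound := card_sub_one_mul_le_of_forms_nonneg (by norm_num) hE linCoeffs_nonneg pair_nonneg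
    triple_nonneg hS hnorm hdist
  have card_lt : ((S.card : ℤ) - 1) * 2 ^ 200 < 4866 * 2 ^ 200 :=
    bound.trans_lt gegenbauerSum_linCoeffs_lt
  have := lt_of_mul_lt_mul_right card_lt (by positivity)
  omega

theorem kissing_number_dim15_le_4866
    (S : Finset (EuclideanSpace ℝ (Fin 15)))
    (hnorm : ∀ x ∈ S, ‖x‖ = 1)
    (hdist : ∀ x ∈ S, ∀ y ∈ S, x ≠ y → 1 ≤ dist x y) :
    S.card ≤ 4866 :=
  kissing_number_dim15_le_4866_general finrank_euclideanSpace_fin S hnorm hdist
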